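/- arXiv:1906.03429 — 9 statements merged into one kernel-verified Lean document; each statement's English description precedes it below -/
import Mathlib

section
/- Let n ≥ 1, let θ, τ be permutations of {1,…,n}, and suppose θ⁻¹τ = C₁C₂⋯C_r is the disjoint cycle expression of θ⁻¹τ (i.e., C₁,…,C_r are pairwise disjoint cycles, each of length at least 2, whose product is θ⁻¹τ). Then X(θ,τ) = { θ·∏_{i∈I} C_i : I ⊆ {1,…,r} }. -/
open Equiv Finset

/-! Put `π = θ⁻¹τ` and `ρ = θ⁻¹σ`, so that `σ ∈ X(θ, τ)` means that `ρ x ∈ {x, π x}` for all `x`.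
If `ρ x = π x ≠ x`, then injectivity of `ρ` prevents it from fixing `π x`; if `ρ x = x ≠ π x`, then
by surjectivity `π x` has a preimage, which can only be `π x` itself. Hence `ρ` fixes either every
point or no point of a cycle of `π`, and it is the product of the cycles in which it fixes no
point. -/

section PointwiseChoices

variable {α : Type*}

/-- The set `X(θ, τ)` of permutations that agree at each point with `θ` or with `τ`. -/
def pointwiseChoices (θ τ : Perm α) : Set (Perm α) :=
  {σ | ∀ x, σ x = θ x ∨ σ x = τ x}

theorem inv_mul_mem_pointwiseChoices_one_iff {θ τ σ : Perm α} :
    θ⁻¹ * σ ∈ pointwiseChoices 1 (θ⁻¹ * τ) ↔ σ ∈ pointwiseChoices θ τ :=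
  forall_congr' fun _ => or_congr Perm.inv_eq_iff_eq θ⁻¹.injective.eq_iff

variable {π ρ c : Perm α}

theorem apply_eq_of_mem_pointwiseChoices_one (hρ : ρ ∈ pointwiseChoices 1 π) {x : α}
    (hx : ρ x ≠ x) : ρ x = π x :=
  (hρ x).resolve_left hx

theorem apply_apply_eq_self_iff_of_mem_pointwiseChoices_one (hρ : ρ ∈ pointwiseChoices 1 π)
    (hc : c ∈ pointwiseChoices 1 π) (x : α) : ρ (c x) = c x ↔ ρ x = x := by
  by_cases hcx : c x = x
  · rw [hcx]
  have hcπ : c x = π x := apply_eq_of_mem_pointwiseChoices_one hc hcx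
  constructor
  · intro hfix
    by_contra hρx
    have hρc : ρ x = c x := (apply_eq_of_mem_pointwiseChoices_one hρ hρx).trans hcπ.symm
    exact hcx (ρ.injective (hfix.trans hρc.symm))
  · intro hρx
    obtain ⟨y, hy⟩ := ρ.surjective (c x)
    by_cases hρy : ρ y = y
    · rwa [← hy, hρy]
    · have hyx : y = x :=
        π.injective ((apply_eq_of_mem_pointwiseChoices_one hρ hρy).symm.trans (hy.trans hcπ))
      rw [hyx] at hρy
      exact absurd hρx hρy

theorem apply_eq_self_iff_of_sameCycle (hρ : ρ ∈ pointwiseChoices 1 π)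
    (hc : c ∈ pointwiseChoices 1 π) {x y : α} (hxy : c.SameCycle x y) : ρ x = x ↔ ρ y = y := by
  have hstep (k : ℤ) : ρ ((c ^ (k + 1)) x) = (c ^ (k + 1)) x ↔ ρ ((c ^ k) x) = (c ^ k) x := by
    rw [add_comm, zpow_one_add, Perm.mul_apply]
    exact apply_apply_eq_self_iff_of_mem_pointwiseChoices_one hρ hc _
  obtain ⟨k, rfl⟩ := hxy
  induction k with
  | zero => rfl
  | succ k ih => exact ih.trans (hstep k).symm
  | pred k ih =>
    have hpred := hstep (-k - 1)
    rw [sub_add_cancel] at hpred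
    exact ih.trans hpred

end PointwiseChoices

section DisjointProd

variable {α ι : Type*} {C : ι → Perm α}

/-- The product `∏_{i ∈ I} C i` of pairwise disjoint permutations; no order on `I` has to be chosen,
since disjoint permutations commute. -/
def disjointProd (hC : Pairwise (Function.onFun Perm.Disjoint C)) (I : Finset ι) : Perm α :=
  I.noncommProd C fun _ _ _ _ hij => (hC hij).commute

variable (hC : Pairwise (Function.onFun Perm.Disjoint C))

theorem disjointProd_singleton (i : ι) : disjointProd hC {i} = C i :=
  noncommProd_singleton i C

theorem disjointProd_apply_eq_self {I : Finset ι} {x : α} (hx : ∀ i ∈ I, C i x = x) :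
    disjointProd hC I x = x :=
  (MulAction.stabilizer (Perm α) x).noncommProd_mem _ hx

theorem disjointProd_apply_of_mem_of_ne {I : Finset ι} {i : ι} (hi : i ∈ I) {x : α}
    (hx : C i x ≠ x) : disjointProd hC I x = C i x := by
  classical
  have hrest : disjointProd hC (I.erase i) x = x := disjointProd_apply_eq_self hC fun j hj =>
    (hC (ne_of_mem_erase hj) x).resolve_right hx
  have hsplit : C i * disjointProd hC (I.erase i) = disjointProd hC I :=
    mul_noncommProd_erase I hi C _
  rw [← hsplit, Perm.mul_apply, hrest]

theorem disjointProd_mem_pointwiseChoices_one {I J : Finset ι} (hIJ : I ⊆ J) :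
    disjointProd hC I ∈ pointwiseChoices 1 (disjointProd hC J) := by
  intro x
  by_cases hx : ∀ i ∈ I, C i x = x
  · exact .inl (disjointProd_apply_eq_self hC hx)
  · push Not at hx
    obtain ⟨i, hi, hix⟩ := hx
    exact .inr ((disjointProd_apply_of_mem_of_ne hC hi hix).trans
      (disjointProd_apply_of_mem_of_ne hC (hIJ hi) hix).symm)

theorem mem_pointwiseChoices_one_disjointProd {J : Finset ι} {i : ι} (hi : i ∈ J) :
    C i ∈ pointwiseChoices 1 (disjointProd hC J) := by
  rw [← disjointProd_singleton hC i]
  exact disjointProd_mem_pointwiseChoices_one hC (singleton_subset_iff.2 hi)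

theorem exists_eq_disjointProd_of_mem_pointwiseChoices_one {J : Finset ι}
    (hcyc : ∀ i ∈ J, (C i).IsCycle) {ρ : Perm α}
    (hρ : ρ ∈ pointwiseChoices 1 (disjointProd hC J)) : ∃ I ⊆ J, ρ = disjointProd hC I := by
  classical
  let I := {i ∈ J | ∃ y, C i y ≠ y ∧ ρ y ≠ y}
  refine ⟨I, filter_subset _ _, Perm.ext fun x => ?_⟩
  by_cases hρx : ρ x = x
  · have hfix : ∀ i ∈ I, C i x = x := by
      intro i hi
      obtain ⟨hiJ, y, hiy, hρy⟩ := mem_filter.1 hi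
      by_contra hix
      have hxy : (C i).SameCycle x y := (hcyc i hiJ).sameCycle hix hiy
      have hCi := mem_pointwiseChoices_one_disjointProd hC hiJ
      exact hρy ((apply_eq_self_iff_of_sameCycle hρ hCi hxy).1 hρx)
    rw [hρx, disjointProd_apply_eq_self hC hfix]
  · have hρπ : ρ x = disjointProd hC J x := apply_eq_of_mem_pointwiseChoices_one hρ hρx
    obtain ⟨i, hiJ, hix⟩ : ∃ i ∈ J, C i x ≠ x := by
      by_contra! hfix
      exact hρx (hρπ.trans (disjointProd_apply_eq_self hC hfix))
    have hiI : i ∈ I := mem_filter.2 ⟨hiJ, x, hix, hρx⟩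
    rw [hρπ, disjointProd_apply_of_mem_of_ne hC hiJ hix, disjointProd_apply_of_mem_of_ne hC hiI hix]

theorem mem_pointwiseChoices_one_disjointProd_iff {J : Finset ι} (hcyc : ∀ i ∈ J, (C i).IsCycle)
    {ρ : Perm α} :
    ρ ∈ pointwiseChoices 1 (disjointProd hC J) ↔ ∃ I ⊆ J, ρ = disjointProd hC I := by
  refine ⟨exists_eq_disjointProd_of_mem_pointwiseChoices_one hC hcyc, ?_⟩
  rintro ⟨I, hIJ, rfl⟩
  exact disjointProd_mem_pointwiseChoices_one hC hIJ

theorem genMatrixFn_stmt0_general [Fintype ι] {θ τ : Perm α} (hcyc : ∀ i, (C i).IsCycle)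
    (hprod : disjointProd hC univ = θ⁻¹ * τ) :
    pointwiseChoices θ τ = {σ | ∃ I : Finset ι, σ = θ * disjointProd hC I} := by
  ext σ
  rw [← inv_mul_mem_pointwiseChoices_one_iff, ← hprod,
    mem_pointwiseChoices_one_disjointProd_iff hC fun i _ => hcyc i]
  simp only [subset_univ, true_and, inv_mul_eq_iff_eq_mul, Set.mem_ofPred_eq]

end DisjointProd

/-- If `θ⁻¹τ = C₁⋯C_r` is the disjoint cycle expression of `θ⁻¹τ`
(pairwise disjoint cycles, each of length at least 2, whose product is `θ⁻¹τ`), then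
`X(θ,τ) = { θ·∏_{i∈I} C_i : I ⊆ [r] }`, where
`X(θ,τ) = { σ ∈ S_n : ∀ i, σ(i) = θ(i) or σ(i) = τ(i) }`. -/
theorem genMatrixFn_stmt0 (n r : ℕ) (hn : 1 ≤ n) (θ τ : Equiv.Perm (Fin n))
    (C : Fin r → Equiv.Perm (Fin n))
    (hcyc : ∀ i, (C i).IsCycle)
    (hlen : ∀ i, 2 ≤ (C i).support.card)
    (hdisj : ∀ i j, i ≠ j → (C i).Disjoint (C j))
    (hprod : (Finset.univ.noncommProd C
      (fun i _ j _ hij => (hdisj i j hij).commute)) = θ⁻¹ * τ) :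
    {σ : Equiv.Perm (Fin n) | ∀ i, σ i = θ i ∨ σ i = τ i} =
      {σ : Equiv.Perm (Fin n) | ∃ I : Finset (Fin r),
        σ = θ * I.noncommProd C (fun i _ j _ hij => (hdisj i j hij).commute)} :=
  genMatrixFn_stmt0_general (fun i j => hdisj i j) hcyc hprod
end

section
/- Let n ≥ 1, let θ, τ be permutations of {1,…,n}, let a, b ∈ ℂ, and let σ ∈ X(θ,τ). Then ∏_{i=1}^n (aP_θ + bP_τ)_{σ(i), i} = a^{n − t_σ − F} · b^{t_σ} · (a+b)^F, where t_σ = n − |Fix(θ⁻¹σ)| and F = |Fix(θ⁻¹τ)|. -/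
/-!
The `i`-th factor of the product is `a + b` where `θ` and `τ` agree. Elsewhere `σ i` equals exactly
one of `θ i` and `τ i`, and the factor is `a` or `b` accordingly. So the three exponents are the
sizes of the classes of a partition of the index set. Since every point where `θ` and `τ` agree is
one where `σ` and `θ` agree, the class with factor `b` is the complement of `Fix(θ⁻¹σ)`, and the
subtractions in the exponents are never truncated.
-/

open Finset

/-- The permutation matrix of `θ`: `(P_θ)_{i,j} = 1` if `i = θ(j)`, else `0`. -/
noncomputable def permMat {n : ℕ} (θ : Equiv.Perm (Fin n)) : Matrix (Fin n) (Fin n) ℂ :=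
  Matrix.of fun i j => if i = θ j then 1 else 0

theorem inv_mul_apply_eq_self_iff {α : Type*} {θ σ : Equiv.Perm α} {i : α} :
    (θ⁻¹ * σ) i = i ↔ σ i = θ i := by
  rw [Equiv.Perm.mul_apply, Equiv.Perm.inv_eq_iff_eq]

theorem ite_add_ite_of_eq_or_eq {κ M : Type*} [DecidableEq κ] [AddZeroClass M] {x y z : κ}
    (hz : z = x ∨ z = y) (a b : M) :
    ((if z = x then a else 0) + if z = y then b else 0) =
      if x = y then a + b else if z = x then a else b := by
  rcases hz with rfl | rfl
  · by_cases hxy : z = y <;> simp [hxy]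
  · by_cases hxy : x = z <;> simp [hxy, Ne.symm]

section Selection

variable {ι κ R : Type*} [Fintype ι] [DecidableEq κ] [CommSemiring R] {f g s : ι → κ}

theorem card_filter_ne_and_ne (hs : ∀ i, s i = f i ∨ s i = g i) :
    #{i | f i ≠ g i ∧ s i ≠ f i} = #{i | s i ≠ f i} := by
  congr! 2 with i
  exact and_iff_right_of_imp fun hsf hfg ↦ (hs i).elim hsf fun hsg ↦ hsf (hsg.trans hfg.symm)

theorem card_filter_ne_and_eq (hs : ∀ i, s i = f i ∨ s i = g i) :
    #{i | f i ≠ g i ∧ s i = f i} = Fintype.card ι - #{i | s i ≠ f i} - #{i | f i = g i} := by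
  have agree_or_differ := card_filter_add_card_filter_not (s := univ) fun i ↦ f i = g i
  have split_differ :=
    card_filter_add_card_filter_not (s := {i | f i ≠ g i}) fun i ↦ s i = f i
  rw [filter_filter, filter_filter, card_filter_ne_and_ne hs] at split_differ
  rw [card_univ] at agree_or_differ
  simp only [ne_eq] at split_differ ⊢
  omega

theorem prod_ite_add_ite_of_eq_or_eq (hs : ∀ i, s i = f i ∨ s i = g i) (a b : R) :
    ∏ i, ((if s i = f i then a else 0) + if s i = g i then b else 0) =
      a ^ #{i | f i ≠ g i ∧ s i = f i} * b ^ #{i | s i ≠ f i} * (a + b) ^ #{i | f i = g i} := by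
  calc
    _ = ∏ i, if f i = g i then a + b else if s i = f i then a else b :=
      prod_congr rfl fun i _ ↦ ite_add_ite_of_eq_or_eq (hs i) a b
    _ = (a + b) ^ #{i | f i = g i} *
          (a ^ #{i | f i ≠ g i ∧ s i = f i} * b ^ #{i | f i ≠ g i ∧ s i ≠ f i}) := by
      simp only [prod_ite, prod_const, filter_filter, ne_eq]
    _ = _ := by rw [card_filter_ne_and_ne hs, mul_comm]

end Selection

section PermMatrix

variable {ι R : Type*} [DecidableEq ι]

theorem permMatrix_inv_apply [Zero R] [One R] (θ : Equiv.Perm ι) (i j : ι) :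
    θ⁻¹.permMatrix R i j = if i = θ j then 1 else 0 := by
  simp [Equiv.symm_apply_eq]

theorem permMat_eq_permMatrix_inv {n : ℕ} (θ : Equiv.Perm (Fin n)) :
    permMat θ = θ⁻¹.permMatrix ℂ := by
  ext i j
  rw [permMatrix_inv_apply, permMat, Matrix.of_apply]

theorem genMatrixFn_stmt2_general [Fintype ι] [CommSemiring R] (θ τ σ : Equiv.Perm ι) (a b : R)
    (hσ : ∀ i, σ i = θ i ∨ σ i = τ i) (tσ F : ℕ)
    (htσ : tσ = Fintype.card ι - #{i | (θ⁻¹ * σ) i = i}) (hF : F = #{i | (θ⁻¹ * τ) i = i}) :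
    ∏ i, (a • θ⁻¹.permMatrix R + b • τ⁻¹.permMatrix R) (σ i) i =
      a ^ (Fintype.card ι - tσ - F) * b ^ tσ * (a + b) ^ F := by
  have htσ' : tσ = #{i | σ i ≠ θ i} := by
    simp only [htσ, inv_mul_apply_eq_self_iff, ← card_compl, compl_filter, ne_eq]
  have hF' : F = #{i | θ i = τ i} := by
    simp only [hF, inv_mul_apply_eq_self_iff, eq_comm (a := θ _)]
  calc
    _ = ∏ i, ((if σ i = θ i then a else 0) + if σ i = τ i then b else 0) := by
      simp only [Matrix.add_apply, Matrix.smul_apply, permMatrix_inv_apply, smul_eq_mul, mul_ite,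
        mul_one, mul_zero]
    _ = _ := by
      rw [prod_ite_add_ite_of_eq_or_eq hσ, card_filter_ne_and_eq hσ, ← htσ', ← hF']

end PermMatrix

/-- For `σ ∈ X(θ,τ)`,
`∏_{i=1}^n (aP_θ + bP_τ)_{σ(i), i} = a^{n − t_σ − F} · b^{t_σ} · (a+b)^F`,
where `t_σ = n − |Fix(θ⁻¹σ)|` and `F = |Fix(θ⁻¹τ)|`. -/
theorem genMatrixFn_stmt2 (n : ℕ) (hn : 1 ≤ n) (θ τ σ : Equiv.Perm (Fin n)) (a b : ℂ)
    (hσ : ∀ i, σ i = θ i ∨ σ i = τ i)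
    (tσ F : ℕ)
    (htσ : tσ = n - (Finset.univ.filter fun i => (θ⁻¹ * σ) i = i).card)
    (hF : F = (Finset.univ.filter fun i => (θ⁻¹ * τ) i = i).card) :
    ∏ i, (a • permMat θ + b • permMat τ) (σ i) i =
      a ^ (n - tσ - F) * b ^ tσ * (a + b) ^ F := by
  simpa only [permMat_eq_permMatrix_inv, Fintype.card_fin] using
    genMatrixFn_stmt2_general θ τ σ a b hσ tσ F (by rwa [Fintype.card_fin]) hF
end

section
/- Let n ≥ 1, let θ, τ be permutations of {1,…,n}, and let a, b ∈ ℂ. Suppose θ⁻¹τ = C₁⋯C_r is the disjoint cycle expression of θ⁻¹τ, where C_i is a cycle of length l_i ≥ 2, and let F = |Fix(θ⁻¹τ)|. Then det(aP_θ + bP_τ) = sgn(θ) · (a+b)^F · Σ_{I ⊆ {1,…,r}} (−1)^{|I| + Σ_{i∈I} l_i} · a^{n − Σ_{i∈I} l_i − F} · b^{Σ_{i∈I} l_i}. -/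
open Finset

/-! After factoring out `P_θ`, the matrix is `a • 1 + b • P_σ` with `σ = θ⁻¹τ`. In the Leibniz
expansion of its determinant a permutation `π` contributes only if `π i ∈ {i, σ i}` for all `i`,
which means that `π` is a product of some of the disjoint cycles of `σ`. Such a `π` contributes
`a + b` at each fixed point of `σ` and, with its sign included, `-(-b) ^ l` for each cycle of
length `l` it contains and `a ^ l` for each cycle it omits. -/

section CycleFactors

open Equiv Equiv.Perm

variable {α : Type*} [Fintype α] [DecidableEq α]

theorem cycleFactorsFinset_subset_iff_forall_eq_or_eq {π σ : Perm α} :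
    π.cycleFactorsFinset ⊆ σ.cycleFactorsFinset ↔ ∀ i, π i = i ∨ π i = σ i := by
  constructor
  · intro h i
    by_cases hi : π i = i
    · exact .inl hi
    · have hc := h (cycleOf_mem_cycleFactorsFinset_iff.2 (mem_support.2 hi))
      have hcσ := (mem_cycleFactorsFinset_iff.1 hc).2 i (by simpa using hi)
      exact .inr (by simpa using hcσ)
  · intro h c hc
    rw [mem_cycleFactorsFinset_iff] at hc ⊢
    refine ⟨hc.1, fun i hi ↦ (hc.2 i hi).trans ((h i).resolve_left ?_)⟩
    exact hc.2 i hi ▸ mem_support.1 hi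

theorem exists_cycleFactorsFinset_eq_of_subset {σ : Perm α} {s : Finset (Perm α)}
    (hs : s ⊆ σ.cycleFactorsFinset) : ∃ π : Perm α, π.cycleFactorsFinset = s :=
  ⟨_, cycleFactorsFinset_eq_finset.2 ⟨fun _ hc ↦ (mem_cycleFactorsFinset_iff.1 (hs hc)).1,
    (cycleFactorsFinset_pairwise_disjoint σ).mono (coe_subset.2 hs), rfl⟩⟩

theorem sum_filter_cycleFactorsFinset_subset {M : Type*} [AddCommMonoid M] (σ : Perm α)
    (f : Finset (Perm α) → M) :
    ∑ π : Perm α with π.cycleFactorsFinset ⊆ σ.cycleFactorsFinset, f π.cycleFactorsFinset =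
      ∑ s ∈ σ.cycleFactorsFinset.powerset, f s := by
  refine sum_nbij cycleFactorsFinset (by simp) cycleFactorsFinset_injective.injOn ?_
    fun _ _ ↦ rfl
  intro s hs
  obtain ⟨π, rfl⟩ := exists_cycleFactorsFinset_eq_of_subset (mem_powerset.1 hs)
  exact ⟨π, by simpa using hs, rfl⟩

theorem card_support_eq_sum_cycleFactorsFinset (σ : Perm α) :
    #σ.support = ∑ c ∈ σ.cycleFactorsFinset, #c.support :=
  σ.sum_cycleType.symm

theorem card_support_sdiff_of_cycleFactorsFinset_subset {π σ : Perm α}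
    (h : π.cycleFactorsFinset ⊆ σ.cycleFactorsFinset) :
    #(σ.support \ π.support) =
      ∑ c ∈ σ.cycleFactorsFinset \ π.cycleFactorsFinset, #c.support := by
  have hsupp : π.support ⊆ σ.support := fun i hi ↦ by
    rw [mem_support] at hi ⊢
    exact (cycleFactorsFinset_subset_iff_forall_eq_or_eq.1 h i).resolve_left hi ▸ hi
  rw [card_sdiff_of_subset hsupp, card_support_eq_sum_cycleFactorsFinset σ,
    card_support_eq_sum_cycleFactorsFinset π, ← sum_sdiff h, Nat.add_sub_cancel]

theorem card_filter_fixed_add_sum_cycleType (σ : Perm α) :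
    #{i | σ i = i} + σ.cycleType.sum = Fintype.card α := by
  rw [sum_cycleType]
  exact card_filter_add_card_filter_not (s := univ) fun i ↦ σ i = i

theorem sign_mul_pow_card_support {R : Type*} [CommRing R] (σ : Perm α) (b : R) :
    ((sign σ : ℤ) : R) * b ^ #σ.support = ∏ c ∈ σ.cycleFactorsFinset, -(-b) ^ #c.support := by
  rw [prod_neg, prod_pow_eq_pow_sum, ← card_support_eq_sum_cycleFactorsFinset,
    sign_of_cycleType, sum_cycleType, neg_pow b, pow_add]
  push_cast
  rw [cycleType_def, Multiset.card_map, card_val]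
  ring

theorem cycleType_noncommProd_of_isCycle {ι : Type*} {s : Finset ι}
    {C : ι → Perm α} (hcyc : ∀ i ∈ s, (C i).IsCycle)
    (hdisj : (s : Set ι).Pairwise fun i j ↦ (C i).Disjoint (C j)) :
    (s.noncommProd C (hdisj.imp fun _ _ ↦ Disjoint.commute)).cycleType =
      s.val.map fun i ↦ #(C i).support := by
  rw [Disjoint.cycleType_noncommProd hdisj, sum_congr rfl fun i hi ↦ (hcyc i hi).cycleType,
    ← Multiset.sum_map_singleton (s.val.map _), Multiset.map_map]
  rfl

end CycleFactors

section Determinant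

open Equiv Equiv.Perm Matrix

variable {α R : Type*} [DecidableEq α] [CommRing R]

theorem smul_one_add_smul_permMatrix_apply (σ : Perm α) (a b : R) (i j : α) :
    (a • 1 + b • σ.permMatrix R) i j = (if j = i then a else 0) + if j = σ i then b else 0 := by
  simp [Matrix.one_apply, eq_comm]

variable [Fintype α]

theorem prod_smul_one_add_smul_permMatrix_of_subset {π σ : Perm α}
    (h : π.cycleFactorsFinset ⊆ σ.cycleFactorsFinset) (a b : R) :
    ∏ i, (a • 1 + b • σ.permMatrix R) i (π i) =
      (a + b) ^ #{i | σ i = i} * b ^ #π.support *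
        ∏ c ∈ σ.cycleFactorsFinset \ π.cycleFactorsFinset, a ^ #c.support := by
  have hentry (i : α) : (a • 1 + b • σ.permMatrix R) i (π i) =
      (if σ i = i then a + b else 1) * (if i ∈ π.support then b else 1) *
        if i ∈ σ.support \ π.support then a else 1 := by
    rw [smul_one_add_smul_permMatrix_apply]
    simp only [mem_sdiff, mem_support]
    rcases cycleFactorsFinset_subset_iff_forall_eq_or_eq.1 h i with hi | hi <;>
      by_cases hσ : σ i = i <;> simp [hi, hσ, eq_comm (a := i)]
  simp only [hentry, prod_mul_distrib, prod_ite_mem, univ_inter, prod_const]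
  rw [prod_ite, prod_const, prod_const_one, mul_one, prod_pow_eq_pow_sum,
    card_support_sdiff_of_cycleFactorsFinset_subset h]

theorem prod_smul_one_add_smul_permMatrix_of_not_subset {π σ : Perm α}
    (h : ¬π.cycleFactorsFinset ⊆ σ.cycleFactorsFinset) (a b : R) :
    ∏ i, (a • 1 + b • σ.permMatrix R) i (π i) = 0 := by
  rw [cycleFactorsFinset_subset_iff_forall_eq_or_eq] at h
  push Not at h
  obtain ⟨i, hi, hσ⟩ := h
  refine prod_eq_zero (mem_univ i) ?_
  rw [smul_one_add_smul_permMatrix_apply, if_neg hi, if_neg hσ, add_zero]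

theorem det_smul_one_add_smul_permMatrix (σ : Perm α) (a b : R) :
    (a • 1 + b • σ.permMatrix R).det =
      (a + b) ^ #{i | σ i = i} * (σ.cycleType.map fun l ↦ a ^ l - (-b) ^ l).prod := by
  calc (a • 1 + b • σ.permMatrix R).det
    _ = ∑ π : Perm α, ((sign π : ℤ) : R) * ∏ i, (a • 1 + b • σ.permMatrix R) i (π i) := by
      rw [← det_transpose, det_apply']
      rfl
    _ = ∑ π : Perm α with π.cycleFactorsFinset ⊆ σ.cycleFactorsFinset,
          ((sign π : ℤ) : R) * ∏ i, (a • 1 + b • σ.permMatrix R) i (π i) := by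
      refine (sum_filter_of_ne fun π _ hπ ↦ ?_).symm
      by_contra h
      exact hπ (by rw [prod_smul_one_add_smul_permMatrix_of_not_subset h, mul_zero])
    _ = ∑ π : Perm α with π.cycleFactorsFinset ⊆ σ.cycleFactorsFinset,
          (a + b) ^ #{i | σ i = i} * ((∏ c ∈ π.cycleFactorsFinset, -(-b) ^ #c.support) *
            ∏ c ∈ σ.cycleFactorsFinset \ π.cycleFactorsFinset, a ^ #c.support) := by
      refine sum_congr rfl fun π hπ ↦ ?_
      rw [prod_smul_one_add_smul_permMatrix_of_subset (mem_filter.1 hπ).2,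
        ← sign_mul_pow_card_support]
      ring
    _ = (a + b) ^ #{i | σ i = i} *
          ∏ c ∈ σ.cycleFactorsFinset, (-(-b) ^ #c.support + a ^ #c.support) := by
      rw [← mul_sum, sum_filter_cycleFactorsFinset_subset σ fun s ↦
        (∏ c ∈ s, -(-b) ^ #c.support) * ∏ c ∈ σ.cycleFactorsFinset \ s, a ^ #c.support, prod_add]
    _ = (a + b) ^ #{i | σ i = i} * (σ.cycleType.map fun l ↦ a ^ l - (-b) ^ l).prod := by
      simp only [neg_add_eq_sub, cycleType_def, Multiset.map_map]
      rfl

theorem det_smul_permMatrix_add_smul_permMatrix (θ τ : Perm α) (a b : R) :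
    (a • θ.permMatrix R + b • τ.permMatrix R).det =
      ((sign θ : ℤ) : R) * (a + b) ^ #{i | (θ⁻¹ * τ) i = i} *
        ((θ⁻¹ * τ).cycleType.map fun l ↦ a ^ l - (-b) ^ l).prod := by
  have hfactor : a • θ.permMatrix R + b • τ.permMatrix R =
      (a • 1 + b • (θ⁻¹ * τ).permMatrix R) * θ.permMatrix R := by
    rw [add_mul, smul_mul, smul_mul, one_mul, ← permMatrix_mul, mul_inv_cancel_left]
  rw [hfactor, det_mul, det_permutation, det_smul_one_add_smul_permMatrix]
  ring

end Determinant

theorem prod_pow_sub_neg_pow {ι R : Type*} [Fintype ι] [CommRing R] (a b : R)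
    (l : ι → ℕ) :
    ∏ i, (a ^ l i - (-b) ^ l i) =
      ∑ I : Finset ι, (-1) ^ (#I + ∑ i ∈ I, l i) * a ^ (∑ i, l i - ∑ i ∈ I, l i) *
        b ^ ∑ i ∈ I, l i := by
  classical
  rw [prod_sub, powerset_univ]
  refine sum_congr rfl fun I _ ↦ ?_
  rw [prod_pow_eq_pow_sum, prod_pow_eq_pow_sum, neg_pow b, pow_add,
    ← sum_sdiff (subset_univ I), Nat.add_sub_cancel]
  ring

theorem genMatrixFn_stmt5_general {α ι R : Type*} [Fintype α] [DecidableEq α] [Fintype ι]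
    [CommRing R] (θ τ : Equiv.Perm α) (a b : R) (C : ι → Equiv.Perm α) (l : ι → ℕ)
    (hcyc : ∀ i, (C i).IsCycle) (hl : ∀ i, #(C i).support = l i)
    (hdisj : Pairwise fun i j ↦ (C i).Disjoint (C j))
    (hprod : univ.noncommProd C (fun _ _ _ _ hij ↦ (hdisj hij).commute) = θ⁻¹ * τ)
    (F : ℕ) (hF : F = #{i | (θ⁻¹ * τ) i = i}) :
    (a • θ.permMatrix R + b • τ.permMatrix R).det =
      ((Equiv.Perm.sign θ : ℤ) : R) * (a + b) ^ F *
        ∑ I : Finset ι, (-1) ^ (#I + ∑ i ∈ I, l i) *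
          a ^ (Fintype.card α - ∑ i ∈ I, l i - F) * b ^ ∑ i ∈ I, l i := by
  have hcycleType : (θ⁻¹ * τ).cycleType = univ.val.map l := by
    simp only [← hprod, ← hl]
    exact cycleType_noncommProd_of_isCycle (fun i _ ↦ hcyc i) fun _ _ _ _ hij ↦ hdisj hij
  have hcard : F + ∑ i, l i = Fintype.card α := by
    rw [hF, ← card_filter_fixed_add_sum_cycleType (θ⁻¹ * τ), hcycleType]
    rfl
  have hexponent (m : ℕ) : Fintype.card α - m - F = ∑ i, l i - m := by omega
  simp only [hexponent, ← prod_pow_sub_neg_pow]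
  rw [det_smul_permMatrix_add_smul_permMatrix, ← hF, hcycleType, Multiset.map_map]
  rfl

theorem det_smul_permMat_add_smul_permMat {n : ℕ} (θ τ : Equiv.Perm (Fin n)) (a b : ℂ) :
    (a • permMat θ + b • permMat τ).det = (a • θ.permMatrix ℂ + b • τ.permMatrix ℂ).det := by
  -- `permMat θ` is the transpose of `θ.permMatrix ℂ`.
  rw [← Matrix.det_transpose]
  congr 1
  ext i j
  simp [permMat, PEquiv.toMatrix_apply, eq_comm]

/-- If `θ⁻¹τ = C₁⋯C_r` is the disjoint cycle expression with `C_i` of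
length `l_i ≥ 2` and `F = |Fix(θ⁻¹τ)|`, then
`det(aP_θ + bP_τ) = sgn(θ)·(a+b)^F·Σ_{I ⊆ [r]} (−1)^{|I| + Σ_{i∈I} l_i} a^{n−Σ_{i∈I}l_i−F} b^{Σ_{i∈I}l_i}`. -/
theorem genMatrixFn_stmt5 (n r : ℕ) (hn : 1 ≤ n) (θ τ : Equiv.Perm (Fin n)) (a b : ℂ)
    (C : Fin r → Equiv.Perm (Fin n)) (l : Fin r → ℕ)
    (hcyc : ∀ i, (C i).IsCycle)
    (hl : ∀ i, (C i).support.card = l i)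
    (hl2 : ∀ i, 2 ≤ l i)
    (hdisj : ∀ i j, i ≠ j → (C i).Disjoint (C j))
    (hprod : (Finset.univ.noncommProd C
      (fun i _ j _ hij => (hdisj i j hij).commute)) = θ⁻¹ * τ)
    (F : ℕ) (hF : F = (Finset.univ.filter fun i => (θ⁻¹ * τ) i = i).card) :
    (a • permMat θ + b • permMat τ).det =
      ((Equiv.Perm.sign θ : ℤ) : ℂ) * (a + b) ^ F *
        ∑ I : Finset (Fin r),
          (-1 : ℂ) ^ (I.card + ∑ i ∈ I, l i) *
            a ^ (n - (∑ i ∈ I, l i) - F) * b ^ (∑ i ∈ I, l i) := by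
  rw [det_smul_permMat_add_smul_permMat,
    genMatrixFn_stmt5_general θ τ a b C l hcyc hl hdisj hprod F hF, Fintype.card_fin]
end

section
/- Let n ≥ 1, let θ, τ be permutations of {1,…,n} such that θ⁻¹τ is an n-cycle, and let a, b ∈ ℂ. Then det(aP_θ + bP_τ) = sgn(θ)·(a^n + (−1)^{n+1} b^n) = det(aP_θ) + det(bP_τ), and per(aP_θ + bP_τ) = a^n + b^n = per(aP_θ) + per(bP_τ). -/
/-!
Expand each product `∏ i, (A + B) i (σ i)`, where `A` and `B` are supported on the graphs of `θ`
and `τ`, as a sum over subsets `s` of indices. The term of `s` can be nonzero only if `σ` agrees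
with `θ` on `s` and with `τ` off `s`. As `σ`, `θ`, `τ` are bijective, the complement of `s` is then
invariant under the `n`-cycle `θ⁻¹ * τ`, so `s` is empty or everything. Hence the product, and
with it the determinant and the permanent, is additive on such a pair of matrices.
-/

open Finset

/-- The permanent of an `n × n` complex matrix. -/
noncomputable def perm' {n : ℕ} (A : Matrix (Fin n) (Fin n) ℂ) : ℂ :=
  ∑ σ : Equiv.Perm (Fin n), ∏ i, A i (σ i)

open Equiv.Perm Matrix

section Perm

variable {ι : Type*}

theorem eq_empty_or_univ_of_isCycleOn_univ {f : Equiv.Perm ι} (hf : f.IsCycleOn Set.univ)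
    {s : Set ι} (hs : f '' s = s) : s = ∅ ∨ s = Set.univ := by
  refine s.eq_empty_or_nonempty.imp_right fun ⟨x, hx⟩ ↦ Set.eq_univ_of_forall fun y ↦ ?_
  obtain ⟨k, rfl⟩ := hf.2 (Set.mem_univ x) (Set.mem_univ y)
  have hbij : Set.BijOn f s s := ⟨Set.mapsTo_iff_image_subset.2 hs.subset, f.injective.injOn, hs.ge⟩
  exact (hbij.perm_zpow k).mapsTo hx

theorem inv_mul_image_compl_of_eqOn {θ τ σ : Equiv.Perm ι} {s : Set ι} (hθ : Set.EqOn σ θ s)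
    (hτ : Set.EqOn σ τ sᶜ) : (θ⁻¹ * τ) '' sᶜ = sᶜ :=
  calc (θ⁻¹ * τ) '' sᶜ
    _ = ⇑θ⁻¹ '' (τ '' sᶜ) := by rw [Equiv.Perm.coe_mul, Set.image_comp]
    _ = ⇑θ⁻¹ '' (σ '' s)ᶜ := by rw [← hτ.image_eq, Set.image_compl_eq σ.bijective]
    _ = ⇑θ⁻¹ '' (θ '' sᶜ) := by rw [hθ.image_eq, Set.image_compl_eq θ.bijective]
    _ = sᶜ := by
      rw [← Set.image_comp, ← Equiv.Perm.coe_mul, inv_mul_cancel, Equiv.Perm.coe_one, Set.image_id]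

theorem eq_empty_or_univ_of_eqOn {θ τ σ : Equiv.Perm ι} (h : (θ⁻¹ * τ).IsCycleOn Set.univ)
    {s : Set ι} (hθ : Set.EqOn σ θ s) (hτ : Set.EqOn σ τ sᶜ) : s = ∅ ∨ s = Set.univ := by
  have hs := eq_empty_or_univ_of_isCycleOn_univ h (inv_mul_image_compl_of_eqOn hθ hτ)
  rwa [Set.compl_empty_iff, Set.compl_univ_iff, or_comm] at hs

variable [Fintype ι] [DecidableEq ι]

theorem isCycleOn_univ_of_card_support_eq {f : Equiv.Perm ι} (hf : f.IsCycle)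
    (hcard : #f.support = Fintype.card ι) : f.IsCycleOn Set.univ := by
  have hsupp : f.support = univ := f.support.card_eq_iff_eq_univ.1 hcard
  have hmoved : {x | f x ≠ x} = Set.univ := by
    rw [← coe_support_eq_set_support, hsupp, coe_univ]
  exact hmoved ▸ hf.isCycleOn

theorem sign_eq_of_isCycleOn_univ [Nonempty ι] {f : Equiv.Perm ι} (hf : f.IsCycleOn Set.univ) :
    sign f = (-1) ^ (Fintype.card ι + 1) := by
  cases subsingleton_or_nontrivial ι with
  | inl _ =>
    obtain ⟨_⟩ := nonempty_unique ι
    rw [Subsingleton.elim f 1, map_one, Fintype.card_unique, one_add_one_eq_two, neg_one_sq]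
  | inr _ =>
    have hne (x : ι) : f x ≠ x := hf.apply_ne Set.nontrivial_univ (Set.mem_univ x)
    have hsupp : f.support = univ := eq_univ_of_forall fun x ↦ mem_support.2 (hne x)
    have hcycle : f.IsCycle :=
      isCycle_iff_exists_isCycleOn.2 ⟨_, Set.nontrivial_univ, hf, fun _ _ ↦ Set.mem_univ _⟩
    rw [hcycle.sign, hsupp, card_univ, pow_succ, mul_neg_one]

end Perm

section Additivity

variable {ι R : Type*} [Fintype ι] [Nonempty ι] {θ τ : Equiv.Perm ι}

theorem prod_add_of_isCycleOn_univ [CommSemiring R] (h : (θ⁻¹ * τ).IsCycleOn Set.univ)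
    (σ : Equiv.Perm ι) {u v : ι → R} (hu : ∀ i, σ i ≠ θ i → u i = 0)
    (hv : ∀ i, σ i ≠ τ i → v i = 0) : ∏ i, (u i + v i) = ∏ i, u i + ∏ i, v i := by
  classical
  rw [Fintype.prod_add, Fintype.sum_eq_add univ ∅ univ_nonempty.ne_empty]
  · simp only [compl_univ, prod_empty, mul_one, compl_empty, one_mul]
  · rintro s ⟨hs_univ, hs_empty⟩
    by_contra hterm
    have hθ : Set.EqOn σ θ s := fun i hi ↦
      of_not_not fun hne ↦ left_ne_zero_of_mul hterm (prod_eq_zero hi (hu i hne))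
    have hτ : Set.EqOn σ τ (s : Set ι)ᶜ := fun i hi ↦
      of_not_not fun hne ↦ right_ne_zero_of_mul hterm (prod_eq_zero (mem_compl.2 hi) (hv i hne))
    rcases eq_empty_or_univ_of_eqOn h hθ hτ with hs | hs
    · exact hs_empty (coe_eq_empty.1 hs)
    · exact hs_univ (coe_eq_univ.1 hs)

variable [DecidableEq ι]

theorem det_add_of_isCycleOn_univ [CommRing R] {A B : Matrix ι ι R}
    (h : (θ⁻¹ * τ).IsCycleOn Set.univ) (hA : ∀ i j, j ≠ θ i → A i j = 0)
    (hB : ∀ i j, j ≠ τ i → B i j = 0) : (A + B).det = A.det + B.det := by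
  rw [← det_transpose, ← det_transpose A, ← det_transpose B]
  simp only [det_apply, transpose_apply, Matrix.add_apply,
    prod_add_of_isCycleOn_univ h _ (fun i ↦ hA i _) (fun i ↦ hB i _), smul_add, sum_add_distrib]

theorem permanent_add_of_isCycleOn_univ [CommSemiring R] {A B : Matrix ι ι R}
    (h : (θ⁻¹ * τ).IsCycleOn Set.univ) (hA : ∀ i j, j ≠ θ i → A i j = 0)
    (hB : ∀ i j, j ≠ τ i → B i j = 0) : (A + B).permanent = A.permanent + B.permanent := by
  rw [← permanent_transpose, ← permanent_transpose A, ← permanent_transpose B]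
  simp only [permanent, transpose_apply, Matrix.add_apply,
    prod_add_of_isCycleOn_univ h _ (fun i ↦ hA i _) (fun i ↦ hB i _), sum_add_distrib]

end Additivity

section PermMatrix

variable {ι R : Type*} [DecidableEq ι]

theorem smul_permMatrix_apply_of_ne [MulZeroOneClass R] (c : R) (σ : Equiv.Perm ι) (i j : ι)
    (hij : j ≠ σ i) : (c • σ.permMatrix R) i j = 0 := by
  rw [Matrix.smul_apply, permMatrix, PEquiv.toMatrix_toPEquiv_apply, Pi.single_eq_of_ne hij,
    smul_zero]

theorem permanent_permMatrix [Fintype ι] [CommSemiring R] (σ : Equiv.Perm ι) :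
    (σ.permMatrix R).permanent = 1 := by
  rw [permMatrix, PEquiv.toMatrix_toPEquiv_eq, permanent_permute_cols, permanent_one]

variable [Fintype ι] [Nonempty ι] [CommRing R]

theorem genMatrixFn_stmt7_general (θ τ : Equiv.Perm ι) (a b : R)
    (h : (θ⁻¹ * τ).IsCycleOn Set.univ) :
    ((a • θ.permMatrix R + b • τ.permMatrix R).det =
        ((sign θ : ℤ) : R) *
          (a ^ Fintype.card ι + (-1 : R) ^ (Fintype.card ι + 1) * b ^ Fintype.card ι) ∧
      (a • θ.permMatrix R + b • τ.permMatrix R).det =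
        (a • θ.permMatrix R).det + (b • τ.permMatrix R).det) ∧
    ((a • θ.permMatrix R + b • τ.permMatrix R).permanent =
        a ^ Fintype.card ι + b ^ Fintype.card ι ∧
      (a • θ.permMatrix R + b • τ.permMatrix R).permanent =
        (a • θ.permMatrix R).permanent + (b • τ.permMatrix R).permanent) := by
  have hdet := det_add_of_isCycleOn_univ h (smul_permMatrix_apply_of_ne a θ)
    (smul_permMatrix_apply_of_ne b τ)
  have hper := permanent_add_of_isCycleOn_univ h (smul_permMatrix_apply_of_ne a θ)
    (smul_permMatrix_apply_of_ne b τ)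
  have hsign : sign τ = sign θ * (-1) ^ (Fintype.card ι + 1) := by
    rw [← sign_eq_of_isCycleOn_univ h, ← Equiv.Perm.sign_mul, mul_inv_cancel_left]
  refine ⟨⟨?_, hdet⟩, ?_, hper⟩
  · rw [hdet, det_smul, det_smul, det_permutation, det_permutation, hsign]
    push_cast
    ring
  · rw [hper, permanent_smul, permanent_smul, permanent_permMatrix, permanent_permMatrix, mul_one,
      mul_one]

end PermMatrix

theorem permMat_eq_transpose_permMatrix {n : ℕ} (θ : Equiv.Perm (Fin n)) :
    permMat θ = (θ.permMatrix ℂ)ᵀ := by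
  ext i j
  rw [transpose_apply, permMatrix, PEquiv.toMatrix_toPEquiv_apply, Pi.single_apply, permMat,
    of_apply]

theorem perm'_transpose {n : ℕ} (A : Matrix (Fin n) (Fin n) ℂ) : perm' Aᵀ = A.permanent :=
  rfl

/-- If `θ⁻¹τ` is an `n`-cycle, then
`det(aP_θ + bP_τ) = sgn(θ)(a^n + (−1)^{n+1}b^n) = det(aP_θ) + det(bP_τ)` and
`per(aP_θ + bP_τ) = a^n + b^n = per(aP_θ) + per(bP_τ)`. -/
theorem genMatrixFn_stmt7 (n : ℕ) (hn : 1 ≤ n) (θ τ : Equiv.Perm (Fin n)) (a b : ℂ)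
    (hcyc : (θ⁻¹ * τ).IsCycle) (hcard : (θ⁻¹ * τ).support.card = n) :
    ((a • permMat θ + b • permMat τ).det =
        ((Equiv.Perm.sign θ : ℤ) : ℂ) * (a ^ n + (-1 : ℂ) ^ (n + 1) * b ^ n) ∧
      (a • permMat θ + b • permMat τ).det = (a • permMat θ).det + (b • permMat τ).det) ∧
    (perm' (a • permMat θ + b • permMat τ) = a ^ n + b ^ n ∧
      perm' (a • permMat θ + b • permMat τ) = perm' (a • permMat θ) + perm' (b • permMat τ)) := by
  have : Nonempty (Fin n) := ⟨⟨0, hn⟩⟩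
  simpa only [permMat_eq_transpose_permMatrix, ← transpose_smul, ← transpose_add, det_transpose,
    perm'_transpose, Fintype.card_fin] using genMatrixFn_stmt7_general θ τ a b
      (isCycleOn_univ_of_card_support_eq hcyc (hcard.trans (Fintype.card_fin n).symm))
end

section
/- Let n ≥ 1, let a, b ∈ ℂ and θ, τ be permutations of {1,…,n} such that A = aP_θ + bP_τ is positive semidefinite. Let G be a subgroup of S_n and let χ : G → ℂ be the character of a finite-dimensional complex representation of G. Then d_χ^G(A) is a real number and d_χ^G(A) ≤ χ(id) · per(A) (in particular, (1/χ(id)) d_χ^G(A) ≤ per(A), i.e., the permanent dominance conjecture holds for A). -/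
open Finset ComplexOrder

/-!
In a positive semidefinite matrix `A = a P_θ + b P_τ`, and more generally in one with at most two
nonzero entries per row, every off-diagonal entry `A i j ≠ 0` forces `A j i ≠ 0` and, by the
principal minor on `{i, j}`, `A j j ≠ 0`; so these two are all the nonzero entries of row `j`.
A permutation `σ` with `∏ i, A i (σ i) ≠ 0` can therefore only move `i` to `j` and back: it is an
involution. For an involution, the product is made of diagonal entries `A i i ≥ 0` and of factors
`A i j * A j i = |A i j|² ≥ 0`, and `ρ σ` has eigenvalues `±1`, so that `χ σ` is real and at most
`χ 1`. The inequality holds term by term.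
-/

open Equiv (Perm)

section InvolutiveProducts

variable {ι : Type*} [Fintype ι]

lemma prod_eq_prod_fixed_mul_prod_lt_of_involutive {M : Type*} [CommMonoid M] [LinearOrder ι]
    {σ : ι → ι} (hσ : σ.Involutive) (f : ι → M) :
    ∏ i, f i = (∏ i with σ i = i, f i) * ∏ i with i < σ i, f i * f (σ i) := by
  have hnot_fixed : ∏ i with ¬ σ i = i, f i
      = (∏ i with i < σ i, f i) * ∏ i with σ i < i, f i := by
    have hdisj : Disjoint ({i | i < σ i} : Finset ι) ({i | σ i < i} : Finset ι) :=
      disjoint_filter.mpr fun _ _ => lt_asymm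
    rw [filter_congr fun i _ => (ne_comm.trans ne_iff_lt_or_gt : σ i ≠ i ↔ _), filter_or,
      prod_union hdisj]
  have hswap : ∏ i with σ i < i, f i = ∏ i with i < σ i, f (σ i) :=
    prod_nbij' σ σ (by simp [hσ _]) (by simp [hσ _]) (by simp [hσ _]) (by simp [hσ _])
      (by simp [hσ _])
  rw [← prod_filter_mul_prod_filter_not univ (fun i => σ i = i), hnot_fixed, hswap,
    prod_mul_distrib]

lemma prod_nonneg_of_involutive_of_star {R : Type*} [CommSemiring R] [PartialOrder R]
    [StarRing R] [StarOrderedRing R] {σ : ι → ι} (hσ : σ.Involutive) {f : ι → R}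
    (hfixed : ∀ i, σ i = i → 0 ≤ f i) (hstar : ∀ i, f (σ i) = star (f i)) : 0 ≤ ∏ i, f i := by
  obtain ⟨_, _⟩ := exists_wellFoundedLT ι
  rw [prod_eq_prod_fixed_mul_prod_lt_of_involutive hσ]
  refine mul_nonneg (prod_nonneg fun i hi => hfixed i (mem_filter.mp hi).2)
    (prod_nonneg fun i _ => ?_)
  rw [hstar]
  exact mul_star_self_nonneg (f i)

end InvolutiveProducts

section Traces

variable {K V : Type*} [AddCommGroup V]

lemma exists_trace_eq_finrank_sub_of_mul_self_eq_one [Field K] [NeZero (2 : K)] [Module K V]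
    [FiniteDimensional K V] {f : Module.End K V} (hf : f * f = 1) :
    ∃ k : ℕ, LinearMap.trace K V f = Module.finrank K V - 2 * k := by
  -- `(1 - f) / 2` is the projection onto the `-1`-eigenspace, whose dimension is `k`.
  have hproj : IsIdempotentElem ((2⁻¹ : K) • (1 - f)) := by
    have hsq : (1 - f) * (1 - f) = (2 : K) • (1 - f) := by
      rw [two_smul, sub_mul, mul_sub, mul_sub, hf, one_mul, one_mul, mul_one]
      abel
    rw [IsIdempotentElem, smul_mul_smul_comm, hsq, smul_smul,
      inv_mul_cancel_right₀ (NeZero.ne (2 : K))]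
  have htrace := (LinearMap.IsIdempotentElem.isProj_range _ hproj).trace
  rw [map_smul, map_sub, LinearMap.trace_one, smul_eq_mul,
    inv_mul_eq_iff_eq_mul₀ (NeZero.ne (2 : K))] at htrace
  exact ⟨_, by rw [← htrace, sub_sub_cancel]⟩

lemma character_le_character_one_of_mul_self_eq_one {G : Type*} [Monoid G] [RCLike K] [Module K V]
    [FiniteDimensional K V] (ρ : Representation K G V) {g : G} (hg : g * g = 1) :
    ρ.character g ≤ ρ.character 1 := by
  obtain ⟨k, hk⟩ := exists_trace_eq_finrank_sub_of_mul_self_eq_one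
    (f := ρ g) (by rw [← map_mul, hg, map_one])
  rw [ρ.char_one, Representation.character, hk]
  exact sub_le_self _ (by positivity)

end Traces

section PosSemidefMatrices

lemma prod_apply_nonneg_of_posSemidef_of_involutive {ι R : Type*} [Fintype ι] [CommRing R]
    [PartialOrder R] [StarRing R] [StarOrderedRing R] {A : Matrix ι ι R} (hA : A.PosSemidef)
    {σ : ι → ι} (hσ : σ.Involutive) : 0 ≤ ∏ i, A i (σ i) := by
  refine prod_nonneg_of_involutive_of_star hσ (fun i hi => ?_) fun i => ?_
  · rw [hi]
    exact hA.diag_nonneg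
  · rw [hσ i, hA.isHermitian.apply]

variable {ι 𝕜 : Type*} [RCLike 𝕜] {A : Matrix ι ι 𝕜}

lemma diag_ne_zero_of_posSemidef_of_apply_ne_zero (hA : A.PosSemidef) {i j : ι}
    (hij : A i j ≠ 0) : A i i ≠ 0 := by
  intro hii
  have hminor : 0 ≤ A i i * A j j - A i j * A j i :=
    Matrix.det_fin_two (A.submatrix ![i, j] ![i, j]) ▸ (hA.submatrix ![i, j]).det_nonneg
  rw [hii, zero_mul, zero_sub, ← hA.isHermitian.apply j i, neg_nonneg] at hminor
  exact hij (by simpa using hminor.antisymm (mul_star_self_nonneg (A i j)))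

lemma involutive_of_posSemidef_of_ncard_support_row_le_two [Finite ι] (hA : A.PosSemidef)
    (hrow : ∀ i, (Function.support (A i)).ncard ≤ 2) {σ : ι → ι} (hσ_inj : σ.Injective)
    (hσ : ∀ i, A i (σ i) ≠ 0) : σ.Involutive := by
  intro i
  by_contra hne
  have hmove : σ i ≠ i := fun h => hne (by rw [h, h])
  have hback : A (σ i) i ≠ 0 := by
    rw [← hA.isHermitian.apply]
    exact star_ne_zero.mpr (hσ i)
  have hdiag : A (σ i) (σ i) ≠ 0 := diag_ne_zero_of_posSemidef_of_apply_ne_zero hA hback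
  exact (hrow (σ i)).not_gt <| (Set.two_lt_ncard (Set.toFinite _)).mpr
    ⟨i, hback, σ i, hdiag, σ (σ i), hσ (σ i), hmove.symm, Ne.symm hne, (hσ_inj.ne hmove).symm⟩

variable [Fintype ι]

lemma prod_apply_nonneg_of_posSemidef_of_ncard_support_row_le_two (hA : A.PosSemidef)
    (hrow : ∀ i, (Function.support (A i)).ncard ≤ 2) {σ : ι → ι} (hσ_inj : σ.Injective) :
    0 ≤ ∏ i, A i (σ i) := by
  by_cases hprod : ∏ i, A i (σ i) = 0
  · exact hprod.ge
  · have hσ : ∀ i, A i (σ i) ≠ 0 := fun i => prod_ne_zero_iff.mp hprod i (mem_univ i)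
    exact prod_apply_nonneg_of_posSemidef_of_involutive hA
      (involutive_of_posSemidef_of_ncard_support_row_le_two hA hrow hσ_inj hσ)

end PosSemidefMatrices

section GeneralizedMatrixFunctions

variable {ι R : Type*} [Fintype ι] [CommSemiring R]

/-- The generalized matrix function `d_χ^G(A)`, the common form of permanent, determinant and
immanants. Here `χ` is an arbitrary function on `G`, and `G` is inferred from `χ`. -/
def generalizedMatrixFunction {G : Subgroup (Perm ι)} [Fintype G] (χ : G → R)
    (A : Matrix ι ι R) : R :=
  ∑ σ : G, χ σ * ∏ i, A i ((σ : Perm ι) i)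

variable [DecidableEq ι]

lemma permanent_eq_sum_prod_apply_perm (A : Matrix ι ι R) :
    A.permanent = ∑ σ : Perm ι, ∏ i, A i (σ i) :=
  A.permanent_transpose.symm

lemma permanent_nonneg_of_prod_nonneg [PartialOrder R] [IsOrderedRing R] {A : Matrix ι ι R}
    (hA : ∀ σ : Perm ι, 0 ≤ ∏ i, A i (σ i)) : 0 ≤ A.permanent := by
  rw [permanent_eq_sum_prod_apply_perm]
  exact sum_nonneg fun σ _ => hA σ

lemma generalizedMatrixFunction_le_mul_permanent [PartialOrder R] [IsOrderedRing R]
    {G : Subgroup (Perm ι)} [Fintype G] {χ : G → R} {A : Matrix ι ι R} {c : R} (hc : 0 ≤ c)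
    (hA : ∀ σ : Perm ι, 0 ≤ ∏ i, A i (σ i))
    (hχ : ∀ σ : G, ∏ i, A i ((σ : Perm ι) i) ≠ 0 → χ σ ≤ c) :
    generalizedMatrixFunction χ A ≤ c * A.permanent := by
  have hterm (σ : G) : χ σ * ∏ i, A i ((σ : Perm ι) i) ≤ c * ∏ i, A i ((σ : Perm ι) i) := by
    by_cases hσ : ∏ i, A i ((σ : Perm ι) i) = 0
    · simp only [hσ, mul_zero, le_refl]
    · exact mul_le_mul_of_nonneg_right (hχ σ hσ) (hA σ)
  calc generalizedMatrixFunction χ A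
      ≤ ∑ σ : G, c * ∏ i, A i ((σ : Perm ι) i) := sum_le_sum fun σ _ => hterm σ
    _ = c * ∑ σ ∈ univ.map (.subtype (· ∈ G)), ∏ i, A i (σ i) := by
        rw [← mul_sum, sum_map, Function.Embedding.coe_subtype]
    _ ≤ c * ∑ σ : Perm ι, ∏ i, A i (σ i) :=
        mul_le_mul_of_nonneg_left
          (sum_le_sum_of_subset_of_nonneg (subset_univ _) fun σ _ _ => hA σ) hc
    _ = c * A.permanent := by rw [permanent_eq_sum_prod_apply_perm]

end GeneralizedMatrixFunctions

lemma ncard_support_row_smul_permMat_add_le_two {n : ℕ} (a b : ℂ) (θ τ : Perm (Fin n))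
    (i : Fin n) : (Function.support ((a • permMat θ + b • permMat τ) i)).ncard ≤ 2 := by
  have hsub : Function.support ((a • permMat θ + b • permMat τ) i) ⊆ {θ⁻¹ i, τ⁻¹ i} := by
    intro j hj
    by_contra hmem
    rw [Set.mem_insert_iff, Set.mem_singleton_iff, not_or, Equiv.Perm.eq_inv_iff_eq,
      Equiv.Perm.eq_inv_iff_eq] at hmem
    exact hj (by simp [permMat, Ne.symm hmem.1, Ne.symm hmem.2])
  calc _ ≤ ({θ⁻¹ i, τ⁻¹ i} : Set (Fin n)).ncard := Set.ncard_le_ncard hsub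
    _ ≤ ({τ⁻¹ i} : Set (Fin n)).ncard + 1 := Set.ncard_insert_le _ _
    _ = 2 := by rw [Set.ncard_singleton]

theorem genMatrixFn_stmt12_general {ι 𝕜 V : Type*} [Fintype ι] [DecidableEq ι] [RCLike 𝕜]
    {A : Matrix ι ι 𝕜} (hA : A.PosSemidef) (hrow : ∀ i, (Function.support (A i)).ncard ≤ 2)
    {G : Subgroup (Perm ι)} [Fintype G] [AddCommGroup V] [Module 𝕜 V] [FiniteDimensional 𝕜 V]
    (ρ : Representation 𝕜 G V) :
    IsSelfAdjoint (generalizedMatrixFunction ρ.character A) ∧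
      generalizedMatrixFunction ρ.character A ≤ ρ.character 1 * A.permanent := by
  have hprod (σ : Perm ι) : 0 ≤ ∏ i, A i (σ i) :=
    prod_apply_nonneg_of_posSemidef_of_ncard_support_row_le_two hA hrow σ.injective
  have hdeg : 0 ≤ ρ.character 1 := by
    rw [ρ.char_one]
    positivity
  have hχ (σ : G) (hσ : ∏ i, A i ((σ : Perm ι) i) ≠ 0) : ρ.character σ ≤ ρ.character 1 := by
    have hinv : Function.Involutive (σ : Perm ι) :=
      involutive_of_posSemidef_of_ncard_support_row_le_two hA hrow (Equiv.injective _)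
        fun i => prod_ne_zero_iff.mp hσ i (mem_univ i)
    exact character_le_character_one_of_mul_self_eq_one ρ (Subtype.ext (Equiv.ext hinv))
  have hle := generalizedMatrixFunction_le_mul_permanent hdeg hprod hχ
  have hbound_nonneg := mul_nonneg hdeg (permanent_nonneg_of_prod_nonneg hprod)
  exact ⟨.of_le hle (.of_nonneg hbound_nonneg), hle⟩

/-- Let `A = aP_θ + bP_τ` be positive semidefinite, `G ≤ S_n`, and let
`χ` be the character of a finite-dimensional complex representation of `G`. Then
`d_χ^G(A)` is real and `d_χ^G(A) ≤ χ(id) · per(A)` (permanent dominance for `A`). -/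
theorem genMatrixFn_stmt12 (n : ℕ) (hn : 1 ≤ n) (a b : ℂ) (θ τ : Equiv.Perm (Fin n))
    (A : Matrix (Fin n) (Fin n) ℂ)
    (hA : A = a • permMat θ + b • permMat τ)
    (hpsd : A.PosSemidef)
    (G : Subgroup (Equiv.Perm (Fin n))) [Fintype G]
    (V : Type) [AddCommGroup V] [Module ℂ V] [FiniteDimensional ℂ V]
    (ρ : Representation ℂ G V)
    (χ : G → ℂ) (hχ : ∀ g : G, χ g = LinearMap.trace ℂ V (ρ g)) :
    (∑ σ : G, χ σ * ∏ i, A i ((σ : Equiv.Perm (Fin n)) i)).im = 0 ∧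
      ∑ σ : G, χ σ * ∏ i, A i ((σ : Equiv.Perm (Fin n)) i) ≤
        χ 1 * ∑ σ : Equiv.Perm (Fin n), ∏ i, A i (σ i) := by
  obtain rfl : χ = ρ.character := funext hχ
  rw [Complex.im_eq_zero_iff_isSelfAdjoint, ← permanent_eq_sum_prod_apply_perm]
  exact genMatrixFn_stmt12_general hpsd
    (hA ▸ ncard_support_row_smul_permMat_add_le_two a b θ τ) ρ
end

section
/- Let n ≥ 1, let G be a subgroup of S_n, let χ : G → ℂ* be a group homomorphism (a linear character of G), let θ, τ be permutations of {1,…,n}, and let a, b ∈ ℂ. Let λ₁, …, λ_n ∈ ℂ be the roots, counted with multiplicity, of the characteristic polynomial of the matrix (conj(a)·b)·P_{θ⁻¹τ}. Then |d_χ^G(aP_θ + bP_τ)|² ≤ (1/n) · Σ_{j=1}^n (|a|² + |b|² + 2·Re(λ_j))^n. -/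
/-!
With `e_σ = e_{σ(1)} ⊗ ⋯ ⊗ e_{σ(n)}` and `u = ∑ σ ∈ G, χ(σ) e_σ`, one has `‖u‖² = |G|` and
`⟨u, A^{⊗n} u⟩ = |G| d_χ^G(A)` for every matrix `A`. By Cauchy–Schwarz,
`|d_χ^G(A)|² ≤ d_χ^G(Aᴴ A)`. For `H = Aᴴ A` positive semidefinite, diagonalising `H` and applying
AM-GM to the eigenvalues of `H^{⊗n}` gives, in the Loewner order,
`n H^{⊗n} ≤ ∑ k, 1 ⊗ ⋯ ⊗ Hⁿ ⊗ ⋯ ⊗ 1` with `Hⁿ` in position `k`. Tested on `u`, the right-hand side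
is `|G| tr Hⁿ`, hence `n |d_χ^G(A)|² ≤ tr (Aᴴ A)ⁿ`.

For `A = aU + bV` with `U`, `V` unitary, `Aᴴ A = |a|² + |b|² + M + Mᴴ` where `M = conj(a) b Uᴴ V` is
normal, so the trace is read off the eigenvalues of `M`.
-/

open Finset Polynomial

section PiKronecker

open Matrix
open scoped ComplexOrder MatrixOrder

variable {ι : Type*} [Fintype ι] {l m n : ι → Type*} {R 𝕜 : Type*}

/-- The Kronecker product of a family of matrices, i.e. the matrix of their tensor product
`⨂ i, A i`; rows and columns are indexed by multi-indices. -/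
def piKronecker [CommMonoid R] (A : ∀ i, Matrix (m i) (n i) R) :
    Matrix (∀ i, m i) (∀ i, n i) R :=
  of fun f g => ∏ i, A i (f i) (g i)

theorem piKronecker_mul [DecidableEq ι] [∀ i, Fintype (m i)] [CommSemiring R]
    (A : ∀ i, Matrix (l i) (m i) R) (B : ∀ i, Matrix (m i) (n i) R) :
    piKronecker A * piKronecker B = piKronecker fun i => A i * B i := by
  ext f g
  simp only [piKronecker, mul_apply, of_apply, Fintype.prod_sum, prod_mul_distrib]

theorem conjTranspose_piKronecker [CommSemiring R] [StarRing R] (A : ∀ i, Matrix (m i) (n i) R) :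
    (piKronecker A)ᴴ = piKronecker fun i => (A i)ᴴ := by
  ext f g
  simp only [piKronecker, conjTranspose_apply, of_apply, star_prod]

theorem piKronecker_diagonal [∀ i, DecidableEq (m i)] [DecidableEq (∀ i, m i)] [CommSemiring R]
    (d : ∀ i, m i → R) :
    piKronecker (fun i => diagonal (d i)) = diagonal fun f => ∏ i, d i (f i) := by
  ext f g
  obtain rfl | hfg := eq_or_ne f g
  · simp only [piKronecker, of_apply, diagonal_apply_eq]
  · obtain ⟨i, hi⟩ := Function.ne_iff.1 hfg
    rw [diagonal_apply_ne _ hfg]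
    exact prod_eq_zero (mem_univ i) (diagonal_apply_ne _ hi)

theorem piKronecker_mul_diagonal_mul_conjTranspose [DecidableEq ι] [∀ i, Fintype (m i)]
    [∀ i, DecidableEq (m i)] [CommSemiring R] [StarRing R]
    (V : ∀ i, Matrix (m i) (m i) R) (d : ∀ i, m i → R) :
    piKronecker (fun i => V i * diagonal (d i) * (V i)ᴴ) =
      piKronecker V * diagonal (fun f => ∏ i, d i (f i)) * (piKronecker V)ᴴ := by
  rw [conjTranspose_piKronecker, ← piKronecker_diagonal, piKronecker_mul, piKronecker_mul]

theorem card_mul_prod_le_sum_pow_card {x : ι → ℝ} (hx : ∀ i, 0 ≤ x i) :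
    Fintype.card ι * ∏ i, x i ≤ ∑ i, x i ^ Fintype.card ι := by
  obtain _ | _ := isEmpty_or_nonempty ι
  · simp
  have hn : (Fintype.card ι : ℝ) ≠ 0 := Nat.cast_ne_zero.2 Fintype.card_ne_zero
  have amgm := Real.geom_mean_le_arith_mean_weighted univ (fun _ => (Fintype.card ι : ℝ)⁻¹)
    (fun i => x i ^ Fintype.card ι) (fun _ _ => by positivity) (by simp [hn])
    (fun i _ => pow_nonneg (hx i) _)
  simp only [Real.pow_rpow_inv_natCast (hx _) Fintype.card_ne_zero, ← mul_sum] at amgm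
  rwa [le_inv_mul_iff₀ (by positivity)] at amgm

theorem card_nsmul_diagonal_prod_le_sum_diagonal_pow [RCLike 𝕜] [∀ i, DecidableEq (m i)]
    {d : ∀ i, m i → ℝ} (hd : ∀ i x, 0 ≤ d i x) :
    Fintype.card ι • diagonal (fun f : ∀ i, m i => ∏ i, (d i (f i) : 𝕜)) ≤
      ∑ k, diagonal fun f : ∀ i, m i => (d k (f k) : 𝕜) ^ Fintype.card ι := by
  have hsub : ∑ k, diagonal (fun f : ∀ i, m i => (d k (f k) : 𝕜) ^ Fintype.card ι) -
      Fintype.card ι • diagonal (fun f : ∀ i, m i => ∏ i, (d i (f i) : 𝕜)) =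
        diagonal fun f => ((∑ k, d k (f k) ^ Fintype.card ι -
          Fintype.card ι * ∏ i, d i (f i) : ℝ) : 𝕜) := by
    ext f g
    rw [Matrix.sub_apply, Matrix.sum_apply, Matrix.smul_apply, nsmul_eq_mul]
    obtain rfl | hfg := eq_or_ne f g
    · simp only [diagonal_apply_eq]
      push_cast
      rfl
    · simp only [diagonal_apply_ne _ hfg, sum_const_zero, mul_zero, sub_zero]
  rw [Matrix.le_iff, hsub]
  exact PosSemidef.diagonal fun f => RCLike.ofReal_nonneg.2 <| sub_nonneg.2 <|
    card_mul_prod_le_sum_pow_card fun i => hd i (f i)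

variable [RCLike 𝕜] [∀ i, Fintype (m i)] [DecidableEq ι] [∀ i, DecidableEq (m i)]

theorem pow_eq_eigenvectorUnitary_mul_diagonal_mul_conjTranspose {p : Type*} [Fintype p]
    [DecidableEq p] {H : Matrix p p 𝕜} (hH : H.IsHermitian) (k : ℕ) :
    H ^ k = (hH.eigenvectorUnitary : Matrix p p 𝕜) *
      diagonal (fun i => (hH.eigenvalues i : 𝕜) ^ k) *
      (hH.eigenvectorUnitary : Matrix p p 𝕜)ᴴ := by
  conv_lhs => rw [hH.spectral_theorem, ← map_pow, diagonal_pow, Unitary.conjStarAlgAut_apply]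
  rfl

theorem piKronecker_pow_eq_eigenvectorUnitary {H : ∀ i, Matrix (m i) (m i) 𝕜}
    (hH : ∀ i, (H i).IsHermitian) (e : ι → ℕ) :
    piKronecker (fun i => H i ^ e i) =
      piKronecker (fun i => ((hH i).eigenvectorUnitary : Matrix (m i) (m i) 𝕜)) *
        diagonal (fun f => ∏ i, ((hH i).eigenvalues (f i) : 𝕜) ^ e i) *
        (piKronecker fun i => ((hH i).eigenvectorUnitary : Matrix (m i) (m i) 𝕜))ᴴ := by
  rw [← piKronecker_mul_diagonal_mul_conjTranspose _ fun i x => ((hH i).eigenvalues x : 𝕜) ^ e i]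
  exact congrArg _ <| funext fun i =>
    pow_eq_eigenvectorUnitary_mul_diagonal_mul_conjTranspose (hH i) (e i)

theorem card_nsmul_piKronecker_le_sum_mulSingle_pow {H : ∀ i, Matrix (m i) (m i) 𝕜}
    (hH : ∀ i, (H i).PosSemidef) :
    Fintype.card ι • piKronecker H ≤
      ∑ k, piKronecker (Pi.mulSingle k (H k ^ Fintype.card ι)) := by
  let d (i : ι) : m i → ℝ := (hH i).isHermitian.eigenvalues
  let V (i : ι) : Matrix (m i) (m i) 𝕜 := (hH i).isHermitian.eigenvectorUnitary
  have hdiagonal := Matrix.le_iff.1 <|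
    card_nsmul_diagonal_prod_le_sum_diagonal_pow (𝕜 := 𝕜) (d := d)
      fun i => (hH i).eigenvalues_nonneg
  set N := Fintype.card ι
  have hpow (e : ι → ℕ) : piKronecker (fun i => H i ^ e i) =
      piKronecker V * diagonal (fun f => ∏ i, (d i (f i) : 𝕜) ^ e i) * (piKronecker V)ᴴ :=
    piKronecker_pow_eq_eigenvectorUnitary (fun i => (hH i).isHermitian) e
  have hself : piKronecker H =
      piKronecker V * diagonal (fun f => ∏ i, (d i (f i) : 𝕜)) * (piKronecker V)ᴴ := by
    simpa only [pow_one] using hpow fun _ => 1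
  have hsingle (k : ι) : piKronecker (Pi.mulSingle k (H k ^ N)) =
      piKronecker V * diagonal (fun f => (d k (f k) : 𝕜) ^ N) * (piKronecker V)ᴴ := by
    have hmulSingle : Pi.mulSingle k (H k ^ N) = fun i => H i ^ (Pi.single k N : ι → ℕ) i := by
      funext i
      obtain rfl | hik := eq_or_ne i k
      · simp only [Pi.mulSingle_eq_same, Pi.single_eq_same]
      · simp only [Pi.mulSingle_eq_of_ne hik, Pi.single_eq_of_ne hik, pow_zero]
    rw [hmulSingle, hpow]
    simp only [Pi.single_apply, pow_ite, pow_zero, prod_ite_eq', mem_univ, if_true]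
  rw [Matrix.le_iff]
  convert! hdiagonal.mul_mul_conjTranspose_same (piKronecker V) using 1
  simp only [hsingle, hself, Matrix.mul_sub, Matrix.sub_mul, Matrix.mul_sum, Matrix.sum_mul,
    Matrix.mul_smul, Matrix.smul_mul]

end PiKronecker

section SymmetrizedTensor

open Matrix
open scoped ComplexOrder

theorem norm_star_dotProduct_sq_le {n 𝕜 : Type*} [Fintype n] [RCLike 𝕜] (x y : n → 𝕜) :
    ((‖star x ⬝ᵥ y‖ ^ 2 : ℝ) : 𝕜) ≤ (star x ⬝ᵥ x) * (star y ⬝ᵥ y) := by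
  have hinner (z w : n → 𝕜) : star z ⬝ᵥ w = inner 𝕜 (WithLp.toLp 2 z) (WithLp.toLp 2 w) := by
    rw [EuclideanSpace.inner_toLp_toLp, dotProduct_comm]
  rw [hinner, hinner, hinner, inner_self_eq_norm_sq_to_K, inner_self_eq_norm_sq_to_K,
    ← RCLike.ofReal_pow, ← RCLike.ofReal_pow, ← RCLike.ofReal_mul, RCLike.ofReal_le_ofReal,
    ← mul_pow]
  exact pow_le_pow_left₀ (norm_nonneg _) (norm_inner_le_norm _ _) 2

theorem exists_ne_apply_ne {ι : Type*} {ρ σ : Equiv.Perm ι} (h : ρ ≠ σ) (k : ι) :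
    ∃ i ≠ k, ρ i ≠ σ i := by
  by_contra! hne
  have hfix : σ⁻¹ (ρ k) = k := by
    by_contra hk
    exact hk (ρ.injective ((hne _ hk).trans (σ.apply_symm_apply _)))
  refine h (Equiv.ext fun i => ?_)
  obtain rfl | hi := eq_or_ne i k
  · exact Equiv.Perm.inv_eq_iff_eq.1 hfix
  · exact hne i hi

theorem star_mul_self_of_monoidHom {G 𝕜 : Type*} [Group G] [Finite G] [RCLike 𝕜] (χ : G →* 𝕜)
    (σ : G) : star (χ σ) * χ σ = 1 := by
  have hnorm : ‖χ σ‖ = 1 := (χ.isOfFinOrder (isOfFinOrder_of_finite σ)).norm_eq_one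
  rw [RCLike.star_def, RCLike.conj_mul, hnorm, RCLike.ofReal_one, one_pow]

variable {ι R 𝕜 : Type*} [Fintype ι] {G : Subgroup (Equiv.Perm ι)} [Fintype G]

/-- The generalized matrix function `d_χ^G(A)` of a subgroup `G` of the symmetric group; `χ` may be
any function on `G`, a linear character being passed through its coercion. -/
def genMatrixFn [CommSemiring R] (χ : G → R) (A : Matrix ι ι R) : R :=
  ∑ σ : G, χ σ * ∏ i, A i ((σ : Equiv.Perm ι) i)

variable [DecidableEq ι]

/-- The symmetrized tensor `∑ σ ∈ G, χ(σ) e_{σ(1)} ⊗ ⋯ ⊗ e_{σ(n)}`, on which `A^{⊗n}` has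
`|G| d_χ^G(A)` as value of its quadratic form. A tensor is encoded by its coordinates, indexed by
multi-indices `ι → ι`, so that `e_{σ(1)} ⊗ ⋯ ⊗ e_{σ(n)}` is the indicator of `σ`. -/
def symmetrizedTensor [AddCommMonoid R] (χ : G → R) : (ι → ι) → R :=
  ∑ σ : G, Pi.single (σ : Equiv.Perm ι) (χ σ)

theorem star_symmetrizedTensor_dotProduct_mulVec [CommSemiring R] [StarRing R] (χ : G → R)
    (M : Matrix (ι → ι) (ι → ι) R) :
    star (symmetrizedTensor χ) ⬝ᵥ (M *ᵥ symmetrizedTensor χ) =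
      ∑ ρ : G, ∑ σ : G, star (χ ρ) * χ σ * M (ρ : Equiv.Perm ι) (σ : Equiv.Perm ι) := by
  simp only [symmetrizedTensor, star_sum, Pi.star_single, mulVec_sum, sum_dotProduct,
    dotProduct_sum, single_dotProduct, mulVec_single, Pi.smul_apply,
    MulOpposite.smul_eq_mul_unop, col_apply, MulOpposite.unop_op]
  rw [sum_comm]
  exact sum_congr rfl fun _ _ => sum_congr rfl fun _ _ => by ring

variable [RCLike 𝕜] (χ : G →* 𝕜)

theorem star_symmetrizedTensor_dotProduct_self :
    star (symmetrizedTensor χ) ⬝ᵥ symmetrizedTensor χ = (Fintype.card G : 𝕜) := by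
  have hone (ρ σ : G) : (1 : Matrix (ι → ι) (ι → ι) 𝕜) (ρ : Equiv.Perm ι) (σ : Equiv.Perm ι) =
      if ρ = σ then 1 else 0 := by
    simp only [one_apply, DFunLike.coe_fn_eq, Subtype.coe_inj]
  have hform := star_symmetrizedTensor_dotProduct_mulVec χ 1
  simpa only [one_mulVec, hone, mul_ite, mul_one, mul_zero, sum_ite_eq, mem_univ, if_true,
    star_mul_self_of_monoidHom, sum_const, card_univ, nsmul_eq_mul] using hform

theorem star_symmetrizedTensor_dotProduct_piKronecker_const (A : Matrix ι ι 𝕜) :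
    star (symmetrizedTensor χ) ⬝ᵥ (piKronecker (fun _ => A) *ᵥ symmetrizedTensor χ) =
      Fintype.card G * genMatrixFn χ A := by
  have hrow (ρ : G) : ∑ σ : G, star (χ ρ) * χ σ *
      ∏ i, A ((ρ : Equiv.Perm ι) i) ((σ : Equiv.Perm ι) i) = genMatrixFn χ A := by
    rw [genMatrixFn, ← Equiv.sum_comp (Equiv.mulRight ρ)]
    refine sum_congr rfl fun σ _ => ?_
    have hprod : ∏ i, A ((ρ : Equiv.Perm ι) i) (((σ * ρ : G) : Equiv.Perm ι) i) =
        ∏ i, A i ((σ : Equiv.Perm ι) i) :=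
      Equiv.prod_comp (ρ : Equiv.Perm ι) fun i => A i ((σ : Equiv.Perm ι) i)
    rw [Equiv.coe_mulRight, hprod, map_mul]
    linear_combination (χ σ * ∏ i, A i ((σ : Equiv.Perm ι) i)) * star_mul_self_of_monoidHom χ ρ
  rw [star_symmetrizedTensor_dotProduct_mulVec]
  simp only [piKronecker, of_apply, hrow, sum_const, card_univ, nsmul_eq_mul]

theorem star_symmetrizedTensor_dotProduct_piKronecker_mulSingle (k : ι) (A : Matrix ι ι 𝕜) :
    star (symmetrizedTensor χ) ⬝ᵥ (piKronecker (Pi.mulSingle k A) *ᵥ symmetrizedTensor χ) =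
      ∑ σ : G, A ((σ : Equiv.Perm ι) k) ((σ : Equiv.Perm ι) k) := by
  have hentry (ρ σ : G) : piKronecker (Pi.mulSingle k A) (ρ : Equiv.Perm ι) (σ : Equiv.Perm ι) =
      if ρ = σ then A ((ρ : Equiv.Perm ι) k) ((ρ : Equiv.Perm ι) k) else 0 := by
    rw [piKronecker, of_apply]
    split_ifs with h
    · subst h
      rw [prod_eq_single k (fun i _ hik => ?_) (absurd (mem_univ k)), Pi.mulSingle_eq_same]
      rw [Pi.mulSingle_eq_of_ne hik, one_apply_eq]
    · obtain ⟨i, hik, hi⟩ := exists_ne_apply_ne (Subtype.coe_ne_coe.2 h) k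
      refine prod_eq_zero (mem_univ i) ?_
      rw [Pi.mulSingle_eq_of_ne hik, one_apply_ne hi]
  rw [star_symmetrizedTensor_dotProduct_mulVec]
  simp only [hentry, mul_ite, mul_zero, sum_ite_eq, mem_univ, if_true,
    star_mul_self_of_monoidHom, one_mul]

theorem card_mul_genMatrixFn_le_trace_pow {H : Matrix ι ι 𝕜} (hH : H.PosSemidef) :
    Fintype.card ι * genMatrixFn χ H ≤ (H ^ Fintype.card ι).trace := by
  set N := Fintype.card ι
  set u := symmetrizedTensor χ with hu
  have hsum : ∑ k, star u ⬝ᵥ (piKronecker (Pi.mulSingle k (H ^ N)) *ᵥ u) =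
      Fintype.card G * (H ^ N).trace := by
    have htrace (σ : G) : ∑ k, (H ^ N) ((σ : Equiv.Perm ι) k) ((σ : Equiv.Perm ι) k) =
        (H ^ N).trace := Equiv.sum_comp (σ : Equiv.Perm ι) fun k => (H ^ N) k k
    simp only [hu, star_symmetrizedTensor_dotProduct_piKronecker_mulSingle]
    rw [sum_comm]
    simp only [htrace, sum_const, card_univ, nsmul_eq_mul]
  have hle := (Matrix.le_iff.1 <| card_nsmul_piKronecker_le_sum_mulSingle_pow
    fun _ : ι => hH).dotProduct_mulVec_nonneg u
  rw [sub_mulVec, sum_mulVec, smul_mulVec, dotProduct_sub, dotProduct_sum, dotProduct_smul,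
    hsum, star_symmetrizedTensor_dotProduct_piKronecker_const, sub_nonneg, nsmul_eq_mul,
    mul_left_comm] at hle
  exact le_of_mul_le_mul_left hle (Nat.cast_pos.2 Fintype.card_pos)

omit [DecidableEq ι] in
theorem norm_genMatrixFn_sq_le (A : Matrix ι ι 𝕜) :
    ((‖genMatrixFn χ A‖ ^ 2 : ℝ) : 𝕜) ≤ genMatrixFn χ (Aᴴ * A) := by
  classical
  set u := symmetrizedTensor χ
  set K := piKronecker fun _ : ι => A
  have hu : star u ⬝ᵥ u = Fintype.card G := star_symmetrizedTensor_dotProduct_self χ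
  have hK : star u ⬝ᵥ (K *ᵥ u) = Fintype.card G * genMatrixFn χ A :=
    star_symmetrizedTensor_dotProduct_piKronecker_const χ A
  have hKK : star (K *ᵥ u) ⬝ᵥ (K *ᵥ u) = Fintype.card G * genMatrixFn χ (Aᴴ * A) := by
    rw [star_mulVec, ← dotProduct_mulVec, mulVec_mulVec, conjTranspose_piKronecker,
      piKronecker_mul, star_symmetrizedTensor_dotProduct_piKronecker_const]
  have cauchySchwarz := norm_star_dotProduct_sq_le u (K *ᵥ u)
  rw [hu, hK, hKK, norm_mul, RCLike.norm_natCast, mul_pow, RCLike.ofReal_mul, RCLike.ofReal_pow,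
    RCLike.ofReal_natCast, sq (Fintype.card G : 𝕜), mul_assoc] at cauchySchwarz
  have hG : (0 : 𝕜) < Fintype.card G := Nat.cast_pos.2 Fintype.card_pos
  exact le_of_mul_le_mul_left (le_of_mul_le_mul_left cauchySchwarz hG) hG

theorem card_mul_norm_genMatrixFn_sq_le_trace_pow (A : Matrix ι ι 𝕜) :
    ((Fintype.card ι * ‖genMatrixFn χ A‖ ^ 2 : ℝ) : 𝕜) ≤ ((Aᴴ * A) ^ Fintype.card ι).trace :=
  calc ((Fintype.card ι * ‖genMatrixFn χ A‖ ^ 2 : ℝ) : 𝕜)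
    _ = Fintype.card ι * ((‖genMatrixFn χ A‖ ^ 2 : ℝ) : 𝕜) := by
      rw [RCLike.ofReal_mul, RCLike.ofReal_natCast]
    _ ≤ Fintype.card ι * genMatrixFn χ (Aᴴ * A) :=
      mul_le_mul_of_nonneg_left (norm_genMatrixFn_sq_le χ A) (Nat.cast_nonneg _)
    _ ≤ ((Aᴴ * A) ^ Fintype.card ι).trace :=
      card_mul_genMatrixFn_le_trace_pow χ (posSemidef_conjTranspose_mul_self A)

end SymmetrizedTensor

section UnitaryCombination

open Matrix

variable {n K : Type*} [Fintype n] [DecidableEq n] [Field K] [IsAlgClosed K]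

theorem det_aeval_eq_prod_roots_charpoly (M : Matrix n n K) (q : K[X]) :
    (aeval M q).det = (M.charpoly.roots.map q.eval).prod := by
  have hlinear (r : K) : (aeval M (X - C r)).det = (M.charpoly.roots.map (X - C r).eval).prod := by
    have hroots := map_roots_comp_C_mul_X_add_C M.charpoly 1 r isUnit_one
    simp only [C_1, one_mul] at hroots
    have haeval : aeval M (X - C r) = M - scalar n r := by
      rw [map_sub, aeval_X, aeval_C]
      rfl
    rw [haeval, Matrix.det_eq_prod_roots_charpoly, Matrix.charpoly_sub_scalar, ← hroots,
      Multiset.map_map]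
    simp
  have hconst : (aeval M (C q.leadingCoeff)).det =
      (M.charpoly.roots.map fun _ => q.leadingCoeff).prod := by
    rw [aeval_C, Matrix.algebraMap_eq_diagonal, det_diagonal, Multiset.map_const',
      Multiset.prod_replicate, IsAlgClosed.card_roots_eq_natDegree, M.charpoly_natDegree_eq_dim]
    simp
  have hprod (s : Multiset K) : (aeval M (s.map fun r => X - C r).prod).det =
      (M.charpoly.roots.map (s.map fun r => X - C r).prod.eval).prod := by
    induction s using Multiset.induction with
    | empty => simp
    | cons r s ih =>
      simp only [Multiset.map_cons, Multiset.prod_cons, map_mul, det_mul, ih, hlinear, eval_mul,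
        Multiset.prod_map_mul]
  rw [(IsAlgClosed.splits q).eq_prod_roots, map_mul, det_mul, hconst, hprod]
  simp only [eval_mul, eval_C, Multiset.prod_map_mul]

theorem roots_charpoly_aeval (M : Matrix n n K) (q : K[X]) :
    (aeval M q).charpoly.roots = M.charpoly.roots.map q.eval := by
  suffices hcharpoly : (aeval M q).charpoly =
      (M.charpoly.roots.map fun z => X - C (q.eval z)).prod by
    rw [hcharpoly, ← roots_multiset_prod_X_sub_C (M.charpoly.roots.map q.eval), Multiset.map_map]
    rfl
  refine Polynomial.funext fun x => ?_
  have hdet := det_aeval_eq_prod_roots_charpoly M (C x - q)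
  rw [map_sub, aeval_C] at hdet
  rw [Matrix.eval_charpoly, eval_multiset_prod, Multiset.map_map]
  refine hdet.trans ?_
  simp

open scoped Matrix.Norms.L2Operator in
theorem trace_cfc (M : Matrix n n ℂ) [IsStarNormal M] (f : ℂ → ℂ) :
    (cfc f M).trace = (M.charpoly.roots.map f).sum := by
  set S := (Matrix.finite_spectrum M).toFinset
  set q := Lagrange.interpolate S id f
  have hq (z : ℂ) (hz : z ∈ spectrum ℂ M) : f z = q.eval z :=
    (Lagrange.eval_interpolate_at_node f Function.injective_id.injOn
      ((Matrix.finite_spectrum M).mem_toFinset.2 hz)).symm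
  rw [cfc_congr hq, cfc_polynomial q M, Matrix.trace_eq_sum_roots_charpoly, roots_charpoly_aeval]
  refine congrArg Multiset.sum (Multiset.map_congr rfl fun z hz => (hq z ?_).symm)
  exact Matrix.mem_spectrum_iff_isRoot_charpoly.2 (isRoot_of_mem_roots hz)

open scoped Matrix.Norms.L2Operator in
theorem trace_smul_one_add_add_conjTranspose_pow (M : Matrix n n ℂ) [IsStarNormal M]
    (s : ℝ) (k : ℕ) :
    (((s : ℂ) • (1 : Matrix n n ℂ) + M + Mᴴ) ^ k).trace =
      (M.charpoly.roots.map fun z => (((s + 2 * z.re) ^ k : ℝ) : ℂ)).sum := by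
  have hcont (f : ℂ → ℂ) : ContinuousOn f (spectrum ℂ M) :=
    (Matrix.finite_spectrum M).continuousOn f
  have hcfc : cfc (fun z : ℂ => (((s + 2 * z.re) ^ k : ℝ) : ℂ)) M =
      ((s : ℂ) • (1 : Matrix n n ℂ) + M + Mᴴ) ^ k := by
    have hre (z : ℂ) : (((s + 2 * z.re) ^ k : ℝ) : ℂ) = (s + z + star z) ^ k := by
      rw [add_assoc, Complex.star_def, Complex.add_conj]
      push_cast
      rfl
    simp only [hre]
    rw [cfc_pow _ _ _ (hcont _), cfc_add _ _ _ (hcont _) (hcont _),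
      cfc_add _ _ _ (hcont _) (hcont _), cfc_const (s : ℂ) M, cfc_id' ℂ M,
      cfc_star_id (R := ℂ) M, Algebra.algebraMap_eq_smul_one]
    rfl
  rw [← hcfc, trace_cfc]

theorem conjTranspose_mul_self_smul_add_smul {U V : Matrix n n ℂ} (hU : U ∈ unitaryGroup n ℂ)
    (hV : V ∈ unitaryGroup n ℂ) (a b : ℂ) :
    (a • U + b • V)ᴴ * (a • U + b • V) =
      ((‖a‖ ^ 2 + ‖b‖ ^ 2 : ℝ) : ℂ) • (1 : Matrix n n ℂ) + (starRingEnd ℂ a * b) • (Uᴴ * V) +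
        ((starRingEnd ℂ a * b) • (Uᴴ * V))ᴴ := by
  have hUU : Uᴴ * U = 1 := mem_unitaryGroup_iff'.1 hU
  have hVV : Vᴴ * V = 1 := mem_unitaryGroup_iff'.1 hV
  simp only [conjTranspose_add, conjTranspose_smul, conjTranspose_mul, conjTranspose_conjTranspose,
    add_mul, mul_add, smul_mul_smul, hUU, hVV, star_mul', Complex.star_def, Complex.conj_conj,
    Complex.conj_mul', Complex.ofReal_add, Complex.ofReal_pow]
  module

theorem permMat_eq_permMatrixHom {n : ℕ} (θ : Equiv.Perm (Fin n)) :
    permMat θ = permMatrixHom θ := by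
  ext i j
  simp [permMat, Equiv.toPEquiv_apply, Equiv.symm_apply_eq]

theorem conjTranspose_permMat_mul_permMat {n : ℕ} (θ τ : Equiv.Perm (Fin n)) :
    (permMat θ)ᴴ * permMat τ = permMat (θ⁻¹ * τ) := by
  have hconjTranspose : (permMat θ)ᴴ = permMat θ⁻¹ := by
    simp only [permMat_eq_permMatrixHom, permMatrixHom_apply, conjTranspose_permMatrix]
  rw [hconjTranspose, permMat_eq_permMatrixHom, permMat_eq_permMatrixHom,
    permMat_eq_permMatrixHom, map_mul]

theorem permMat_mem_unitaryGroup {n : ℕ} (θ : Equiv.Perm (Fin n)) :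
    permMat θ ∈ unitaryGroup (Fin n) ℂ := by
  rw [mem_unitaryGroup_iff', star_eq_conjTranspose, conjTranspose_permMat_mul_permMat,
    inv_mul_cancel, permMat_eq_permMatrixHom, map_one]

theorem genMatrixFn_stmt13_general {ι : Type*} [Fintype ι] [DecidableEq ι] [Nonempty ι]
    {G : Subgroup (Equiv.Perm ι)} [Fintype G] (χ : G →* ℂ) {U V : Matrix ι ι ℂ}
    (hU : U ∈ unitaryGroup ι ℂ) (hV : V ∈ unitaryGroup ι ℂ) (a b : ℂ) (lam : ι → ℂ)
    (hlam : ((starRingEnd ℂ a * b) • (Uᴴ * V)).charpoly = ∏ j, (X - C (lam j))) :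
    ‖genMatrixFn χ (a • U + b • V)‖ ^ 2 ≤
      1 / Fintype.card ι * ∑ j, (‖a‖ ^ 2 + ‖b‖ ^ 2 + 2 * (lam j).re) ^ Fintype.card ι := by
  have hUV : IsStarNormal (Uᴴ * V) :=
    isStarNormal_of_mem_unitary (mul_mem (Unitary.star_mem hU) hV)
  have hroots : ((starRingEnd ℂ a * b) • (Uᴴ * V)).charpoly.roots = univ.val.map lam := by
    rw [hlam, ← roots_multiset_prod_X_sub_C (univ.val.map lam), Multiset.map_map]
    rfl
  have htrace : (((a • U + b • V)ᴴ * (a • U + b • V)) ^ Fintype.card ι).trace =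
      ((∑ j, (‖a‖ ^ 2 + ‖b‖ ^ 2 + 2 * (lam j).re) ^ Fintype.card ι : ℝ) : ℂ) := by
    rw [conjTranspose_mul_self_smul_add_smul hU hV, trace_smul_one_add_add_conjTranspose_pow,
      hroots, Multiset.map_map, Complex.ofReal_sum]
    rfl
  have hle := card_mul_norm_genMatrixFn_sq_le_trace_pow χ (a • U + b • V)
  rw [htrace] at hle
  rw [one_div, le_inv_mul_iff₀ (Nat.cast_pos.2 Fintype.card_pos)]
  exact Complex.real_le_real.1 hle

end UnitaryCombination

/-- For a linear character `χ` of a subgroup `G` of `S_n`, and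
`λ₁,…,λ_n` the roots (with multiplicity) of the characteristic polynomial of
`(conj a · b)·P_{θ⁻¹τ}`, we have
`|d_χ^G(aP_θ + bP_τ)|² ≤ (1/n)·Σ_j (|a|² + |b|² + 2 Re(λ_j))^n`. -/
theorem genMatrixFn_stmt13 (n : ℕ) (hn : 1 ≤ n)
    (G : Subgroup (Equiv.Perm (Fin n))) [Fintype G] (χ : G →* ℂˣ)
    (θ τ : Equiv.Perm (Fin n)) (a b : ℂ) (lam : Fin n → ℂ)
    (hlam : ((starRingEnd ℂ a * b) • permMat (θ⁻¹ * τ)).charpoly =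
      ∏ j, (X - C (lam j))) :
    ‖
        (∑ σ : G, (χ σ : ℂ) *
          ∏ i, (a • permMat θ + b • permMat τ) i ((σ : Equiv.Perm (Fin n)) i))‖ ^ 2 ≤
      (1 / (n : ℝ)) *
        ∑ j, (‖a‖ ^ 2 + ‖b‖ ^ 2 + 2 * (lam j).re) ^ n := by
  have : Nonempty (Fin n) := ⟨⟨0, hn⟩⟩
  rw [← conjTranspose_permMat_mul_permMat] at hlam
  simpa only [Fintype.card_fin, genMatrixFn, MonoidHom.comp_apply, Units.coeHom_apply] using
    genMatrixFn_stmt13_general ((Units.coeHom ℂ).comp χ) (permMat_mem_unitaryGroup θ)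
      (permMat_mem_unitaryGroup τ) a b lam hlam
end

section
/- Let n ≥ 1 and let θ, τ be disjoint permutations of {1,…,n} (i.e., for every i ∈ {1,…,n}, θ(i) = i or τ(i) = i). Then S_θ · S_τ = S_{θτ}. -/
/-- The symmetric matrix `S_θ`: `(S_θ)_{i,j} = 1` if `θ(i) = j` or `θ⁻¹(i) = j`, else `0`. -/
noncomputable def symMat {n : ℕ} (θ : Equiv.Perm (Fin n)) : Matrix (Fin n) (Fin n) ℂ :=
  Matrix.of fun i j => if θ i = j ∨ θ⁻¹ i = j then 1 else 0

/-!
If `τ` fixes `i`, then row `i` of `S_{στ}` is row `i` of `S_σ`; as disjoint permutations commute, it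
is row `i` of `S_τ` if instead `σ` fixes `i`. The product `S_σ S_τ` has the same rows: row `i` of
`S_σ` is the `i`-th unit vector if `σ` fixes `i`, and if `τ` fixes `i` it vanishes at every point
moved by `τ`, so that multiplication by `S_τ` leaves it unchanged.
-/

open Equiv Matrix

/-- The matrix `S_σ` of a permutation `σ` of an arbitrary index type, with entries in an arbitrary
type `R` with `0` and `1`; `symMat` is the case of `Fin n` and `ℂ`. -/
def symmPermMatrix (R : Type*) {α : Type*} [DecidableEq α] [Zero R] [One R] (σ : Perm α) :
    Matrix α α R :=
  of fun i j => if σ i = j ∨ σ⁻¹ i = j then 1 else 0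

namespace symmPermMatrix

variable {R α : Type*} [DecidableEq α] {σ τ : Perm α} {i : α}

section ZeroOne

variable [Zero R] [One R]

theorem isSymm (σ : Perm α) : (symmPermMatrix R σ).IsSymm := by
  refine IsSymm.ext fun i j => ?_
  have entry_iff : (σ j = i ∨ σ⁻¹ j = i) ↔ (σ i = j ∨ σ⁻¹ i = j) := by
    rw [Perm.inv_eq_iff_eq, Perm.inv_eq_iff_eq, eq_comm, or_comm, eq_comm (a := j)]
  simp only [symmPermMatrix, of_apply, entry_iff]

theorem row_eq_one_row (hi : σ i = i) : symmPermMatrix R σ i = (1 : Matrix α α R) i := by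
  have hi' : σ⁻¹ i = i := Perm.inv_eq_iff_eq.mpr hi.symm
  ext j
  simp only [symmPermMatrix, of_apply, hi, hi', or_self, one_apply]

theorem mul_row_eq_left (hστ : Commute σ τ) (hi : τ i = i) :
    symmPermMatrix R (σ * τ) i = symmPermMatrix R σ i := by
  have apply_eq : (σ * τ) i = σ i := by rw [Perm.mul_apply, hi]
  have inv_apply_eq : (σ * τ)⁻¹ i = σ⁻¹ i := by
    rw [hστ.eq, _root_.mul_inv_rev, Perm.mul_apply, Perm.inv_eq_iff_eq.mpr hi.symm]
  ext j
  simp only [symmPermMatrix, of_apply, apply_eq, inv_apply_eq]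

theorem apply_eq_zero_of_disjoint (hστ : σ.Disjoint τ) (hi : τ i = i) {k : α} (hk : τ k ≠ k) :
    symmPermMatrix R σ i k = 0 := by
  have hik : i ≠ k := fun h => hk (h ▸ hi)
  rw [(isSymm σ).apply k i, row_eq_one_row ((hστ k).resolve_right hk), one_apply_ne hik.symm]

end ZeroOne

variable [Fintype α] [NonAssocSemiring R]

theorem vecMul_eq_self {v : α → R} (hv : ∀ k, τ k ≠ k → v k = 0) :
    v ᵥ* symmPermMatrix R τ = v := by
  have summand_eq (j k : α) : v k * symmPermMatrix R τ k j = v k * (1 : Matrix α α R) k j := by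
    by_cases hk : τ k = k
    · rw [row_eq_one_row hk]
    · rw [hv k hk, zero_mul, zero_mul]
  calc v ᵥ* symmPermMatrix R τ = v ᵥ* 1 :=
        funext fun j => Finset.sum_congr rfl fun k _ => summand_eq j k
    _ = v := vecMul_one v

end symmPermMatrix

theorem genMatrixFn_stmt16_general {R α : Type*} [Fintype α] [DecidableEq α] [NonAssocSemiring R]
    {σ τ : Perm α} (hστ : σ.Disjoint τ) :
    symmPermMatrix R σ * symmPermMatrix R τ = symmPermMatrix R (σ * τ) := by
  refine funext fun i => ?_
  rw [mul_apply_eq_vecMul]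
  rcases hστ i with hi | hi
  · rw [symmPermMatrix.row_eq_one_row hi, ← mul_apply_eq_vecMul, one_mul, hστ.commute.eq,
      symmPermMatrix.mul_row_eq_left hστ.commute.symm hi]
  · rw [symmPermMatrix.mul_row_eq_left hστ.commute hi]
    exact symmPermMatrix.vecMul_eq_self fun k =>
      symmPermMatrix.apply_eq_zero_of_disjoint hστ hi

/-- If `θ` and `τ` are disjoint permutations of `{1,…,n}`
(i.e., for every `i`, `θ(i) = i` or `τ(i) = i`), then `S_θ · S_τ = S_{θτ}`. -/
theorem genMatrixFn_stmt16 (n : ℕ) (hn : 1 ≤ n) (θ τ : Equiv.Perm (Fin n))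
    (hdisj : ∀ i, θ i = i ∨ τ i = i) :
    symMat θ * symMat τ = symMat (θ * τ) :=
  genMatrixFn_stmt16_general hdisj
end

section
/- Let n ≥ 1 and let π be a permutation of {1,…,n} that is a cycle of length ℓ ≥ 2 (so the order of π is ℓ). Then det(S_π) = −1 if ℓ = 2; det(S_π) = 2 if ℓ is odd; det(S_π) = −4 if ℓ > 2 and ℓ ≡ 2 (mod 4); and det(S_π) = 0 if ℓ ≡ 0 (mod 4). -/
/-!
The matrix `S_θ` is the 0-1 matrix of the union of the graphs of `θ` and `θ⁻¹`. Permuting its rows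
by `θ` turns it into the matrix of the union of the graphs of `θ²` and of the identity, at the cost
of the factor `sign θ`. For a permutation `σ`, the matrix of the union of the graphs of `σ` and the
identity is the product of the corresponding matrices of the cycles of `σ`. For a single cycle `c`
of length `ℓ`, only `1` and `c` contribute to the Leibniz formula, so that the determinant is
`1 + sign c = 1 - (-1) ^ ℓ`. Finally, the square of a cycle of length `ℓ > 2` consists of `gcd ℓ 2`
cycles of length `ℓ / gcd ℓ 2`.
-/

open Equiv Equiv.Perm Finset

section Cycles

variable {α : Type*} {c : Perm α}

theorem eq_or_eq_one_of_forall_apply_eq_or_eq {σ : Perm α} (hc : c.IsCycle)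
    (h : ∀ i, σ i = c i ∨ σ i = i) : σ = c ∨ σ = 1 := by
  have commute : Commute σ c := Equiv.ext fun i => by
    rw [mul_apply, mul_apply]
    rcases h i with hi | hi
    · rcases h (c i) with hci | hci
      · rw [hci, hi]
      · rw [hci, hi]
        exact congrArg c (σ.injective (hci.trans hi.symm)).symm
    · obtain ⟨j, hj⟩ := σ.surjective (c i)
      rcases h j with hj' | hj'
      · obtain rfl : j = i := c.injective (hj'.symm.trans hj)
        rw [hi, ← hj, hi, hi]
      · rw [hi, ← hj, hj', hj']
  refine or_iff_not_imp_right.mpr fun hσ => Equiv.ext fun y => ?_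
  obtain ⟨x, hσx⟩ : ∃ x, σ x ≠ x := by
    contrapose! hσ
    exact Equiv.ext hσ
  have hx : σ x = c x := (h x).resolve_right hσx
  by_cases hy : c y = y
  · exact (h y).elim id fun hy' => hy'.trans hy.symm
  · obtain ⟨k, rfl⟩ := hc.exists_zpow_eq (hx ▸ hσx) hy
    calc σ ((c ^ k) x) = (c ^ k) (σ x) := Equiv.congr_fun (commute.zpow_right k) x
      _ = (c ^ k) (c x) := by rw [hx]
      _ = c ((c ^ k) x) := Equiv.congr_fun ((Commute.refl c).zpow_left k) x

variable [Fintype α] [DecidableEq α]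

theorem eq_orderOf_of_mem_cycleType_pow {k ℓ : ℕ} (hc : c.IsCycle)
    (hℓ : ℓ ∈ (c ^ k).cycleType) : ℓ = orderOf (c ^ k) := by
  refine Nat.dvd_antisymm (dvd_of_mem_cycleType hℓ) (orderOf_dvd_of_pow_eq_one ?_)
  obtain ⟨d, τ, hmul, hdisj, hd, rfl⟩ := mem_cycleType_iff.mp hℓ
  obtain ⟨x, hx⟩ := hd.nonempty_support
  have hτx : τ x = x := (hdisj x).resolve_left (mem_support.mp hx)
  have hpow_x : ((c ^ k) ^ #d.support) x = x := by
    rw [hmul, hdisj.commute.mul_pow, ← hd.orderOf, pow_orderOf_eq_one, one_mul]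
    exact pow_apply_eq_self_of_apply_eq_self hτx _
  have hcx : c x ≠ x := fun h => mem_support.mp hx <| by
    simpa [hmul, hτx] using pow_apply_eq_self_of_apply_eq_self h k
  rw [← pow_mul] at hpow_x ⊢
  exact hc.pow_eq_one_iff.mpr ⟨x, hcx, hpow_x⟩

theorem cycleType_pow_of_isCycle {k : ℕ} (hc : c.IsCycle) (hk : ¬ #c.support ∣ k) :
    (c ^ k).cycleType =
      Multiset.replicate ((#c.support).gcd k) (#c.support / (#c.support).gcd k) := by
  have order_eq : orderOf (c ^ k) = #c.support / (#c.support).gcd k := by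
    rw [orderOf_pow, hc.orderOf]
  have eq_replicate := Multiset.eq_replicate_card.mpr fun ℓ hℓ =>
    (eq_orderOf_of_mem_cycleType_pow hc hℓ).trans order_eq
  have gcd_mul : (#c.support).gcd k * (#c.support / (#c.support).gcd k) = #c.support :=
    Nat.mul_div_cancel' (Nat.gcd_dvd_left _ _)
  have card_mul : (c ^ k).cycleType.card * (#c.support / (#c.support).gcd k) = #c.support := by
    rw [← smul_eq_mul, ← Multiset.sum_replicate, ← eq_replicate, sum_cycleType,
      hc.support_pow_eq_iff.mpr (hc.orderOf ▸ hk)]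
  have card_eq : (c ^ k).cycleType.card = (#c.support).gcd k :=
    Nat.eq_of_mul_eq_mul_right (order_eq ▸ orderOf_pos _) (card_mul.trans gcd_mul.symm)
  rwa [card_eq] at eq_replicate

end Cycles

section PermUnionMatrix

variable {α : Type*} [DecidableEq α]

/-- The 0-1 matrix of the union of the graphs of two permutations. Rows index the arguments, so for
`σ = τ` this is `σ.permMatrix R`, and `symMat θ` is the case `σ = θ`, `τ = θ⁻¹`, `R = ℂ`. -/
def permUnionMatrix (R : Type*) [Zero R] [One R] (σ τ : Perm α) : Matrix α α R :=
  Matrix.of fun i j => if σ i = j ∨ τ i = j then 1 else 0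

variable [Fintype α] (R : Type*)

section NonAssocSemiring

variable [NonAssocSemiring R]

theorem permUnionMatrix_one_mul_apply (σ : Perm α) (M : Matrix α α R) (i j : α) :
    (permUnionMatrix R σ 1 * M) i j = if σ i = i then M i j else M (σ i) j + M i j := by
  rw [Matrix.mul_apply]
  split_ifs with hi
  · simp [permUnionMatrix, hi]
  · have row_eq (k : α) : permUnionMatrix R σ 1 i k =
        (if σ i = k then 1 else 0) + if i = k then 1 else 0 := by
      by_cases hk : i = k
      · simp [permUnionMatrix, ← hk, hi]
      · simp [permUnionMatrix, hk]
    simp [row_eq, add_mul, sum_add_distrib]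

theorem permUnionMatrix_mul_one_of_disjoint {σ τ : Perm α} (h : σ.Disjoint τ) :
    permUnionMatrix R (σ * τ) 1 = permUnionMatrix R σ 1 * permUnionMatrix R τ 1 := by
  ext i j
  rw [permUnionMatrix_one_mul_apply]
  split_ifs with hi
  · have hστi : σ (τ i) = τ i := by rw [← mul_apply, h.commute.eq, mul_apply, hi]
    exact if_congr (by simp [hστi]) rfl rfl
  · have hτi : τ i = i := (h i).resolve_left hi
    have hτσi : τ (σ i) = σ i := (h (σ i)).resolve_left fun h' => hi (σ.injective h')
    by_cases hj : i = j
    · simp [permUnionMatrix, hτi, hτσi, ← hj, hi]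
    · simp [permUnionMatrix, hτi, hτσi, hj]

end NonAssocSemiring

variable [CommRing R]

theorem det_permUnionMatrix_eq_sum_sign (σ τ : Perm α) :
    (permUnionMatrix R σ τ).det = ∑ ρ with ∀ i, ρ i = σ i ∨ ρ i = τ i, ((sign ρ : ℤ) : R) := by
  rw [← Matrix.det_transpose, Matrix.det_apply', sum_filter]
  refine sum_congr rfl fun ρ _ => ?_
  simp only [permUnionMatrix, Matrix.transpose_apply, Matrix.of_apply, prod_ite_zero,
    prod_const_one, mem_univ, true_imp_iff, mul_ite, mul_one, mul_zero, eq_comm (a := ρ _)]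

theorem det_permUnionMatrix_eq_sign_mul (σ τ : Perm α) :
    (permUnionMatrix R σ τ).det = (sign τ : ℤ) * (permUnionMatrix R (σ * τ⁻¹) 1).det := by
  have rows_permuted : permUnionMatrix R σ τ = (permUnionMatrix R (σ * τ⁻¹) 1).submatrix τ id := by
    ext i j
    simp [permUnionMatrix]
  rw [rows_permuted, Matrix.det_permute]

theorem det_permUnionMatrix_one_of_isCycle {c : Perm α} (hc : c.IsCycle) :
    (permUnionMatrix R c 1).det = 1 - (-1) ^ #c.support := by
  have filter_eq : ({ρ | ∀ i, ρ i = c i ∨ ρ i = (1 : Perm α) i} : Finset (Perm α)) = {c, 1} := by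
    ext ρ
    simp only [mem_filter_univ, mem_insert, mem_singleton]
    refine ⟨eq_or_eq_one_of_forall_apply_eq_or_eq hc, ?_⟩
    rintro (rfl | rfl) <;> simp
  rw [det_permUnionMatrix_eq_sum_sign, filter_eq, sum_pair hc.ne_one, hc.sign, Perm.sign_one]
  push_cast
  ring

theorem det_permUnionMatrix_one (σ : Perm α) :
    (permUnionMatrix R σ 1).det = (σ.cycleType.map fun ℓ => 1 - (-1 : R) ^ ℓ).prod := by
  induction σ using cycle_induction_on with
  | base_one =>
    have one_eq : permUnionMatrix R (1 : Perm α) 1 = 1 := by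
      ext i j
      simp [permUnionMatrix, Matrix.one_apply]
    simp [one_eq]
  | base_cycles c hc => simp [det_permUnionMatrix_one_of_isCycle R hc, hc.cycleType]
  | induction_disjoint σ τ h _ ihσ ihτ =>
    rw [permUnionMatrix_mul_one_of_disjoint R h, Matrix.det_mul, ihσ, ihτ, h.cycleType_mul,
      Multiset.map_add, Multiset.prod_add]

theorem det_permUnionMatrix_inv (θ : Perm α) :
    (permUnionMatrix R θ θ⁻¹).det =
      (sign θ : ℤ) * ((θ ^ 2).cycleType.map fun ℓ => 1 - (-1 : R) ^ ℓ).prod := by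
  rw [det_permUnionMatrix_eq_sign_mul, det_permUnionMatrix_one, sign_inv, inv_inv, ← pow_two]

theorem det_permUnionMatrix_inv_of_isCycle {c : Perm α} (hc : c.IsCycle) (h : 2 < #c.support) :
    (permUnionMatrix R c c⁻¹).det = -(-1) ^ #c.support *
      (1 - (-1) ^ (#c.support / (#c.support).gcd 2)) ^ (#c.support).gcd 2 := by
  rw [det_permUnionMatrix_inv, cycleType_pow_of_isCycle hc (Nat.not_dvd_of_pos_of_lt two_pos h),
    Multiset.map_replicate, Multiset.prod_replicate, hc.sign]
  push_cast
  rfl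

theorem det_permUnionMatrix_inv_of_isCycle_of_odd {c : Perm α} (hc : c.IsCycle)
    (h : Odd #c.support) :
    (permUnionMatrix R c c⁻¹).det = 2 := by
  have two_lt : 2 < #c.support := by
    have := hc.two_le_card_support
    grind
  rw [det_permUnionMatrix_inv_of_isCycle R hc two_lt, Nat.coprime_two_right.mpr h, Nat.div_one,
    h.neg_one_pow]
  norm_num

theorem det_permUnionMatrix_inv_of_isCycle_of_even {c : Perm α} (hc : c.IsCycle)
    (h2 : 2 < #c.support) (h : Even #c.support) :
    (permUnionMatrix R c c⁻¹).det = -(1 - (-1) ^ (#c.support / 2)) ^ 2 := by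
  rw [det_permUnionMatrix_inv_of_isCycle R hc h2, Nat.gcd_eq_right h.two_dvd, h.neg_one_pow,
    neg_one_mul]

theorem genMatrixFn_stmt17_general (π : Perm α) (hcyc : π.IsCycle) :
    (#π.support = 2 → (permUnionMatrix R π π⁻¹).det = -1) ∧
      (Odd #π.support → (permUnionMatrix R π π⁻¹).det = 2) ∧
      (2 < #π.support ∧ #π.support % 4 = 2 → (permUnionMatrix R π π⁻¹).det = -4) ∧
      (#π.support % 4 = 0 → (permUnionMatrix R π π⁻¹).det = 0) := by
  refine ⟨fun h => ?_, det_permUnionMatrix_inv_of_isCycle_of_odd R hcyc, ?_, fun h => ?_⟩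
  · have sq_eq_one : π ^ 2 = 1 := by rw [← h, ← hcyc.orderOf, pow_orderOf_eq_one]
    simp [det_permUnionMatrix_inv, sq_eq_one, hcyc.sign, h]
  · rintro ⟨h2, h⟩
    have half_odd : Odd (#π.support / 2) := Nat.odd_iff.mpr (by lia)
    rw [det_permUnionMatrix_inv_of_isCycle_of_even R hcyc h2 (Nat.even_iff.mpr (by lia)),
      half_odd.neg_one_pow]
    norm_num
  · have two_lt : 2 < #π.support := by have := hcyc.two_le_card_support; lia
    have half_even : Even (#π.support / 2) := Nat.even_iff.mpr (by lia)
    rw [det_permUnionMatrix_inv_of_isCycle_of_even R hcyc two_lt (Nat.even_iff.mpr (by lia)),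
      half_even.neg_one_pow]
    norm_num

end PermUnionMatrix

/-- If `π` is a cycle of length `ℓ ≥ 2`, then `det(S_π)` is `−1` if
`ℓ = 2`, `2` if `ℓ` is odd, `−4` if `ℓ > 2` and `ℓ ≡ 2 (mod 4)`, and `0` if
`ℓ ≡ 0 (mod 4)`. -/
theorem genMatrixFn_stmt17 (n ℓ : ℕ) (hn : 1 ≤ n) (π : Equiv.Perm (Fin n))
    (hcyc : π.IsCycle) (hlen : π.support.card = ℓ) (hl2 : 2 ≤ ℓ) :
    (ℓ = 2 → (symMat π).det = -1) ∧
      (Odd ℓ → (symMat π).det = 2) ∧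
      (2 < ℓ ∧ ℓ % 4 = 2 → (symMat π).det = -4) ∧
      (ℓ % 4 = 0 → (symMat π).det = 0) :=
  hlen ▸ genMatrixFn_stmt17_general ℂ π hcyc
end

section
/- Let n ≥ 1 and let θ be a permutation of {1,…,n}. Then the disjoint cycle decomposition of θ contains a cycle whose length is divisible by 4 if and only if det(S_θ) = 0. -/
/-! A vector `v` lies in the kernel of `S_θ` exactly when `v (θ² x) = -v x` for all `x`: the sum
`v (θ i) + v (θ⁻¹ i)` must vanish at `i = θ x`, and if `θ i = θ⁻¹ i`, so that the matrix entry is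
`1` and not `2`, the two conditions still agree because `2` is not a zero divisor. Such a `v`
changes sign at each step along an orbit of `θ²`, so it can be nonzero only on orbits of even
length, and every such orbit carries one. Finally, `θ²` has an orbit of even length if and only if
`θ` has one of length divisible by `4`.
-/

open Equiv.Perm Finset Function
open scoped Matrix

section Dynamics

variable {α R : Type*}

theorem dvd_minimalPeriod_iterate_iff {f : α → α} {x : α} {k m : ℕ} (hk : k ≠ 0) (hkm : k ∣ m) :
    m ∣ minimalPeriod f^[k] x ↔ m * k ∣ minimalPeriod f x := by
  rw [minimalPeriod_iterate_eq_div_gcd hk]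
  have div_gcd (h : k ∣ minimalPeriod f x) :
      m ∣ minimalPeriod f x / (minimalPeriod f x).gcd k ↔ m * k ∣ minimalPeriod f x := by
    rw [Nat.gcd_eq_right h, Nat.dvd_div_iff_mul_dvd h, mul_comm]
  constructor
  · intro h
    have hm : m ∣ minimalPeriod f x := h.trans (Nat.div_dvd_of_dvd (Nat.gcd_dvd_left _ _))
    exact (div_gcd (hkm.trans hm)).1 h
  · intro h
    exact (div_gcd (dvd_of_mul_left_dvd h)).2 h

theorem even_minimalPeriod_of_semiconj_neg [NonAssocRing R] [NoZeroDivisors R] [Nontrivial R]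
    (hR : ringChar R ≠ 2) {f : α → α} {v : α → R} (hv : Semiconj v f Neg.neg) {x : α}
    (hx : v x ≠ 0) : Even (minimalPeriod f x) := by
  by_contra hodd
  have hper : Neg.neg^[minimalPeriod f x] (v x) = v x := (isPeriodicPt_minimalPeriod f x).map hv
  rw [neg_involutive.iterate_odd (Nat.not_even_iff_odd.1 hodd)] at hper
  exact hx ((Ring.eq_self_iff_eq_zero_of_char_ne_two hR).1 hper)

theorem not_sameCycle_sq_apply_of_even_minimalPeriod {σ : Equiv.Perm α} {x : α}
    (hx : Even (minimalPeriod σ x)) : ¬(σ ^ 2).SameCycle x (σ x) := by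
  rintro ⟨k, hk⟩
  have hfix : (σ ^ (2 * k - 1)) • x = x := by
    rw [sub_eq_neg_add, zpow_add, zpow_mul, zpow_neg_one, mul_smul]
    exact Equiv.Perm.inv_eq_iff_eq.2 hk
  have hdvd : (minimalPeriod σ x : ℤ) ∣ 2 * k - 1 :=
    MulAction.zpow_smul_eq_iff_minimalPeriod_dvd.1 hfix
  have htwo : (2 : ℤ) ∣ 2 * k - 1 := (Int.natCast_dvd_natCast.2 hx.two_dvd).trans hdvd
  omega

theorem exists_ne_zero_semiconj_neg_of_even_minimalPeriod [NonAssocRing R] [Nontrivial R]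
    {σ : Equiv.Perm α} {x : α} (hx : Even (minimalPeriod σ x)) :
    ∃ v : α → R, v ≠ 0 ∧ Semiconj v σ Neg.neg := by
  classical
  let w (y : α) : R := if (σ ^ 2).SameCycle x y then 1 else 0
  have hw (y : α) : w (σ (σ y)) = w y := by
    simp only [w, ← Equiv.Perm.mul_apply, ← sq, sameCycle_apply_right]
  refine ⟨fun y => w y - w (σ y), ?_, fun y => ?_⟩
  · refine Function.ne_iff.2 ⟨x, ?_⟩
    simp [w, SameCycle.refl, not_sameCycle_sq_apply_of_even_minimalPeriod hx]
  · simp only [hw, neg_sub]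

theorem exists_ne_zero_semiconj_neg_iff [NonAssocRing R] [NoZeroDivisors R] [Nontrivial R]
    (hR : ringChar R ≠ 2) (σ : Equiv.Perm α) :
    (∃ v : α → R, v ≠ 0 ∧ Semiconj v σ Neg.neg) ↔ ∃ x, Even (minimalPeriod σ x) := by
  constructor
  · rintro ⟨v, hv, hσ⟩
    obtain ⟨x, hx⟩ := Function.ne_iff.1 hv
    exact ⟨x, even_minimalPeriod_of_semiconj_neg hR hσ hx⟩
  · rintro ⟨x, hx⟩
    exact exists_ne_zero_semiconj_neg_of_even_minimalPeriod hx

end Dynamics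

section Cycles

variable {α : Type*}

theorem minimalPeriod_eq_card_of_isCycleOn {σ : Equiv.Perm α} {s : Finset α} {x : α}
    (hσ : σ.IsCycleOn s) (hx : x ∈ s) : minimalPeriod σ x = #s :=
  Nat.dvd_right_iff_eq.1 fun k => by
    rw [← isPeriodicPt_iff_minimalPeriod_dvd, ← hσ.pow_apply_eq hx, coe_pow, IsPeriodicPt,
      IsFixedPt]

theorem exists_cycleFactorsFinset_dvd_card_support_iff [Fintype α] [DecidableEq α]
    (σ : Equiv.Perm α) {d : ℕ} (hd : d ≠ 1) :
    (∃ c ∈ σ.cycleFactorsFinset, d ∣ #c.support) ↔ ∃ x, d ∣ minimalPeriod σ x := by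
  have card_support {c : Equiv.Perm α} (hc : c ∈ σ.cycleFactorsFinset) {x : α}
      (hx : x ∈ c.support) : minimalPeriod σ x = #c.support :=
    minimalPeriod_eq_card_of_isCycleOn (isCycleOn_support_of_mem_cycleFactorsFinset hc) hx
  constructor
  · rintro ⟨c, hc, hdvd⟩
    obtain ⟨x, hx⟩ := (mem_cycleFactorsFinset_iff.1 hc).1.nonempty_support
    exact ⟨x, card_support hc hx ▸ hdvd⟩
  · rintro ⟨x, hdvd⟩
    have hx : x ∈ σ.support := by
      rw [Equiv.Perm.mem_support]
      intro hfix
      rw [minimalPeriod_eq_one_iff_isFixedPt.2 hfix] at hdvd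
      exact hd (Nat.dvd_one.1 hdvd)
    obtain ⟨c, hc, hxc⟩ := mem_support_iff_mem_support_of_mem_cycleFactorsFinset.1 hx
    exact ⟨c, hc, card_support hc hxc ▸ hdvd⟩

end Cycles

section PermSymmMatrix

variable {α : Type*} [DecidableEq α]

/-- The matrix `S_σ` of a permutation `σ` of an arbitrary type, with entries in any `R` that
has `0` and `1`: the adjacency matrix of the graph joining each `i` to `σ i`, with orientations and
multiplicities forgotten, so that its entries at a `2`-cycle are `1`, not `2`. -/
def permSymmMatrix (R : Type*) [Zero R] [One R] (σ : Equiv.Perm α) : Matrix α α R :=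
  Matrix.of fun i j => if σ i = j ∨ σ⁻¹ i = j then 1 else 0

variable {R : Type*}

theorem permSymmMatrix_mulVec_apply [Fintype α] [NonAssocSemiring R] (σ : Equiv.Perm α)
    (v : α → R) (i : α) : (permSymmMatrix R σ *ᵥ v) i = ∑ j ∈ {σ i, σ⁻¹ i}, v j := by
  simp only [permSymmMatrix, Matrix.mulVec, dotProduct, Matrix.of_apply, ite_mul, one_mul,
    zero_mul, ← sum_filter]
  congr 1
  ext j
  simp [eq_comm]

theorem sum_pair_eq_zero_iff_eq_neg [NonAssocRing R] [NoZeroDivisors R] [Nontrivial R]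
    (hR : ringChar R ≠ 2) (v : α → R) (a b : α) : ∑ j ∈ {a, b}, v j = 0 ↔ v a = -v b := by
  obtain rfl | hab := eq_or_ne a b
  · rw [pair_eq_singleton, sum_singleton, eq_comm (a := v a) (b := -v a),
      Ring.eq_self_iff_eq_zero_of_char_ne_two hR]
  · rw [sum_pair hab, add_eq_zero_iff_eq_neg]

theorem permSymmMatrix_mulVec_eq_zero_iff [Fintype α] [NonAssocRing R] [NoZeroDivisors R]
    [Nontrivial R] (hR : ringChar R ≠ 2) (σ : Equiv.Perm α) (v : α → R) :
    permSymmMatrix R σ *ᵥ v = 0 ↔ Semiconj v ⇑(σ ^ 2) Neg.neg := by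
  have hker : permSymmMatrix R σ *ᵥ v = 0 ↔ ∀ i, v (σ i) = -v (σ⁻¹ i) := by
    simp only [funext_iff, permSymmMatrix_mulVec_apply, Pi.zero_apply,
      sum_pair_eq_zero_iff_eq_neg hR]
  rw [hker, ← σ.forall_congr_right]
  simp only [coe_inv, Equiv.symm_apply_apply, sq, Semiconj, Equiv.Perm.mul_apply]

end PermSymmMatrix

theorem genMatrixFn_stmt18_general {α R : Type*} [Fintype α] [DecidableEq α] [CommRing R]
    [IsDomain R] (hR : ringChar R ≠ 2) (σ : Equiv.Perm α) :
    (∃ c ∈ σ.cycleFactorsFinset, 4 ∣ #c.support) ↔ (permSymmMatrix R σ).det = 0 := by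
  calc (∃ c ∈ σ.cycleFactorsFinset, 4 ∣ #c.support)
    _ ↔ ∃ x, 4 ∣ minimalPeriod σ x :=
      exists_cycleFactorsFinset_dvd_card_support_iff σ (by decide)
    _ ↔ ∃ x, Even (minimalPeriod ⇑(σ ^ 2) x) := by
      simp only [even_iff_two_dvd, coe_pow,
        dvd_minimalPeriod_iterate_iff two_ne_zero (dvd_refl 2), Nat.reduceMul]
    _ ↔ ∃ v : α → R, v ≠ 0 ∧ Semiconj v ⇑(σ ^ 2) Neg.neg :=
      (exists_ne_zero_semiconj_neg_iff hR (σ ^ 2)).symm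
    _ ↔ ∃ v : α → R, v ≠ 0 ∧ permSymmMatrix R σ *ᵥ v = 0 := by
      simp only [permSymmMatrix_mulVec_eq_zero_iff hR]
    _ ↔ (permSymmMatrix R σ).det = 0 := Matrix.exists_mulVec_eq_zero_iff

/-- The disjoint cycle decomposition of `θ` contains a cycle whose
length is divisible by 4 if and only if `det(S_θ) = 0`. -/
theorem genMatrixFn_stmt18 (n : ℕ) (hn : 1 ≤ n) (θ : Equiv.Perm (Fin n)) :
    (∃ c ∈ θ.cycleFactorsFinset, 4 ∣ c.support.card) ↔ (symMat θ).det = 0 :=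
  genMatrixFn_stmt18_general (by simp [ringChar.eq_zero]) θ
end
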